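/- arXiv:1106.6343 — 3 statements merged into one kernel-verified Lean document; each statement's English description precedes it below -/
import Mathlib

section
/- Let A = R[X,Y]/(F, F_X, F_Y) and let R′ be the image of R under the canonical map R → A. Then A is an integral domain, and for every element a ∈ A there exist elements r, s ∈ R′ with s ≠ 0 and s·a = r; that is, the inclusion R′ → A induces an isomorphism of the fields of fractions Q(R′) = Q(A). -/
open MvPolynomial

set_option synthInstance.maxHeartbeats 1000000
set_option maxHeartbeats 1000000

def idxSet (p q : ℕ) : Finset (ℕ × ℕ) :=
  (Finset.range q ×ˢ Finset.range p).filter fun t => t.1 * p + t.2 * q < p * q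

/-- `R = K[{A_νμ}]`, the polynomial ring in the indeterminates `A_νμ`, `(ν,μ) ∈ I`. -/
abbrev coefRing (K : Type) [Field K] (p q : ℕ) := MvPolynomial ↥(idxSet p q) K

/-- `R[X,Y]`, with `X 0 = X` and `X 1 = Y`. -/
abbrev genRing (K : Type) [Field K] (p q : ℕ) := MvPolynomial (Fin 2) (coefRing K p q)

/-- The generic normed Weierstraß polynomial
`F = Y^p − X^q + Σ_{(ν,μ) ∈ I} A_νμ X^ν Y^μ ∈ R[X,Y]` of type `p,q`. -/
noncomputable def genF (K : Type) [Field K] (p q : ℕ) : genRing K p q :=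
  X 1 ^ p - X 0 ^ q +
    ∑ i : idxSet p q, C (MvPolynomial.X i) * X 0 ^ (i : ℕ × ℕ).1 * X 1 ^ (i : ℕ × ℕ).2

section Derivations

variable {K : Type*} [Field K]

/-- Chain rule for a derivation applied to a polynomial expression. -/
theorem derivation_aeval_eq_sum {ι B : Type*} [Fintype ι] [CommRing B] [Algebra K B]
    (d : Derivation K B B) (a : ι → B) (D : MvPolynomial ι K) :
    d (aeval a D) = ∑ i, aeval a (pderiv i D) * d (a i) := by
  classical
  induction D using MvPolynomial.induction_on with
  | C c => simp [← algebraMap_eq]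
  | add f g hf hg => simp [hf, hg, add_mul, Finset.sum_add_distrib]
  | mul_X f j hf =>
    simp only [map_mul, aeval_X, Derivation.leibniz, hf, smul_eq_mul, pderiv_X, map_add,
      add_mul, Finset.sum_add_distrib, Finset.mul_sum]
    congr 1
    · rw [Finset.sum_eq_single j]
      · simp
      · intro i _ hi
        simp [hi.symm]
      · simp
    · exact Finset.sum_congr rfl fun i _ => by ring

theorem pderiv_comm {σ : Type*} (i j : σ) (f : MvPolynomial σ K) :
    pderiv i (pderiv j f) = pderiv j (pderiv i f) := by
  ext m
  by_cases h : i = j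
  · rw [h]
  · simp only [coeff_pderiv, Finsupp.add_apply, Finsupp.single_eq_of_ne h,
      Finsupp.single_eq_of_ne (Ne.symm h), add_right_comm m, add_zero, mul_right_comm]

/-- In characteristic zero, a nonconstant polynomial has a nonzero partial derivative of
smaller total degree. -/
theorem exists_pderiv_ne_zero_totalDegree_lt [CharZero K] {σ : Type*} {D : MvPolynomial σ K}
    (hD : D.totalDegree ≠ 0) :
    ∃ i, pderiv i D ≠ 0 ∧ (pderiv i D).totalDegree < D.totalDegree := by
  classical
  have h : ∃ m ∈ D.support, ∃ i, m i ≠ 0 := by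
    by_contra! h
    exact hD ((totalDegree_eq_zero_iff _ D).2 h)
  obtain ⟨m, hm, i, hi⟩ := h
  refine ⟨i, fun h0 => ?_, ?_⟩
  · have h1 := congrArg (coeff (m - Finsupp.single i 1)) h0
    have h2 : m - Finsupp.single i 1 + Finsupp.single i 1 = m :=
      tsub_add_cancel_of_le (by simpa [Nat.one_le_iff_ne_zero] using hi)
    rw [coeff_pderiv, h2, coeff_zero, mul_eq_zero] at h1
    rcases h1 with h1 | h1
    · exact mem_support_iff.1 hm h1
    · exact Nat.cast_add_one_ne_zero _ h1
  · rw [totalDegree, Finset.sup_lt_iff (Nat.pos_of_ne_zero hD)]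
    intro n hn
    have h1 : n + Finsupp.single i 1 ∈ D.support := by
      rw [mem_support_iff, coeff_pderiv] at hn
      exact mem_support_iff.2 (left_ne_zero_of_mul hn)
    have h2 := le_totalDegree h1
    rw [Finsupp.sum_add_index' (by simp) (by simp), Finsupp.sum_single_index rfl] at h2
    omega

/-- An algebraically dependent family in characteristic zero satisfies a relation one of whose
partial derivatives is not a relation. -/
theorem exists_aeval_eq_zero_aeval_pderiv_ne_zero [CharZero K] {ι B : Type*} [CommRing B]
    [Nontrivial B] [Algebra K B] {a : ι → B} (ha : ¬ AlgebraicIndependent K a) :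
    ∃ D : MvPolynomial ι K, aeval a D = 0 ∧ ∃ i, aeval a (pderiv i D) ≠ 0 := by
  classical
  rw [algebraicIndependent_iff] at ha
  push Not at ha
  have hex : ∃ d, ∃ D : MvPolynomial ι K, aeval a D = 0 ∧ D ≠ 0 ∧ D.totalDegree = d := by
    obtain ⟨D, h0, h1⟩ := ha
    exact ⟨_, D, h0, h1, rfl⟩
  obtain ⟨D, h0, h1, hdeg⟩ := Nat.find_spec hex
  have hnc : D.totalDegree ≠ 0 := by
    intro h
    rw [totalDegree_eq_zero_iff_eq_C] at h
    rw [h, aeval_C, map_eq_zero_iff _ (algebraMap K B).injective] at h0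
    rw [h0, C_0] at h
    exact h1 h
  obtain ⟨i, hi, hlt⟩ := exists_pderiv_ne_zero_totalDegree_lt hnc
  refine ⟨D, h0, i, fun h => ?_⟩
  exact Nat.find_min hex (hdeg ▸ hlt) ⟨_, h, hi, rfl⟩

end Derivations

section SingularPoint

variable {K ι : Type} [Field K] (i₀ i₁ i₂ : ι)

/-- The indices other than `i₀`, `i₁`, `i₂`. -/
abbrev otherIdx := {i : ι // i ≠ i₀ ∧ i ≠ i₁ ∧ i ≠ i₂}

variable {i₀ i₁ i₂}

/-- The inclusion of the polynomial ring in two coordinates and the parameters other than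
`i₀`, `i₁`, `i₂` into the polynomial ring in the two coordinates and all parameters. -/
noncomputable def liftOther : MvPolynomial (Fin 2 ⊕ otherIdx i₀ i₁ i₂) K →ₐ[K]
    MvPolynomial (Fin 2) (MvPolynomial ι K) :=
  aeval (Sum.elim X fun j => C (X j.1))

theorem pderiv_liftOther (g : MvPolynomial (Fin 2 ⊕ otherIdx i₀ i₁ i₂) K) (k : Fin 2) :
    pderiv k (liftOther g) = liftOther (pderiv (.inl k) g) :=
  (aeval_sumElim_pderiv_inl g (fun j => X j.1) k).symm

variable (f : MvPolynomial (Fin 2 ⊕ otherIdx i₀ i₁ i₂) K)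

/-- The polynomial `f + A_{i₀} + A_{i₁} X + A_{i₂} Y`. -/
noncomputable def addLinear : MvPolynomial (Fin 2) (MvPolynomial ι K) :=
  liftOther f + C (X i₀) + C (X i₁) * X 0 + C (X i₂) * X 1

theorem pderiv_zero_addLinear :
    pderiv 0 (addLinear f) = liftOther (pderiv (.inl 0) f) + C (X i₁) := by
  simp [addLinear, pderiv_liftOther]

theorem pderiv_one_addLinear :
    pderiv 1 (addLinear f) = liftOther (pderiv (.inl 1) f) + C (X i₂) := by
  simp [addLinear, pderiv_liftOther]

variable [DecidableEq ι]

theorem sum_eq_add_sum_otherIdx [Fintype ι] {M : Type*} [AddCommMonoid M]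
    (h₀₁ : i₁ ≠ i₀) (h₀₂ : i₂ ≠ i₀) (h₁₂ : i₂ ≠ i₁) (g : ι → M) :
    ∑ i, g i = g i₀ + g i₁ + g i₂ + ∑ j : otherIdx i₀ i₁ i₂, g j.1 := by
  have hc : (Finset.univ.filter fun i => i ≠ i₀ ∧ i ≠ i₁ ∧ i ≠ i₂) = {i₀, i₁, i₂}ᶜ := by
    ext i
    simp
  rw [← Finset.sum_add_sum_compl {i₀, i₁, i₂}, ← hc,
    Finset.sum_insert (by simp [h₀₁.symm, h₀₂.symm]), Finset.sum_insert (by simp [h₁₂.symm]),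
    Finset.sum_singleton, ← Finset.sum_subtype_eq_sum_filter, Finset.subtype_univ, ← add_assoc]

/-- The values of the parameters for which
`f + A_{i₀} + A_{i₁} X + A_{i₂} Y` is singular at the generic point. -/
noncomputable def singularParam (i : ι) :
    MvPolynomial (Fin 2 ⊕ otherIdx i₀ i₁ i₂) K :=
  if h₀ : i = i₀ then
    X (.inl 0) * pderiv (.inl 0) f + X (.inl 1) * pderiv (.inl 1) f - f
  else if h₁ : i = i₁ then -pderiv (.inl 0) f
  else if h₂ : i = i₂ then -pderiv (.inl 1) f
  else X (.inr ⟨i, h₀, h₁, h₂⟩)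

/-- Evaluation at the generic singular point. -/
noncomputable def evalSingular :
    MvPolynomial (Fin 2) (MvPolynomial ι K) →+* MvPolynomial (Fin 2 ⊕ otherIdx i₀ i₁ i₂) K :=
  eval₂Hom (aeval (singularParam f)).toRingHom fun k => X (Sum.inl k)

theorem evalSingular_C (r : MvPolynomial ι K) :
    evalSingular f (C r) = aeval (singularParam f) r := by
  simp only [evalSingular, eval₂Hom_C]
  rfl

theorem evalSingular_X (k : Fin 2) : evalSingular f (X k) = X (.inl k) := by
  simp [evalSingular]

theorem singularParam_const : singularParam f i₀ =
    X (.inl 0) * pderiv (.inl 0) f + X (.inl 1) * pderiv (.inl 1) f - f := by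
  simp [singularParam]

theorem singularParam_left (h₀₁ : i₁ ≠ i₀) : singularParam f i₁ = -pderiv (.inl 0) f := by
  simp [singularParam, h₀₁]

theorem singularParam_right (h₀₂ : i₂ ≠ i₀) (h₁₂ : i₂ ≠ i₁) :
    singularParam f i₂ = -pderiv (.inl 1) f := by
  simp [singularParam, h₀₂, h₁₂]

theorem singularParam_other (j : otherIdx i₀ i₁ i₂) : singularParam f j.1 = X (.inr j) := by
  simp [singularParam, j.2.1, j.2.2.1, j.2.2.2]

theorem evalSingular_liftOther (g : MvPolynomial (Fin 2 ⊕ otherIdx i₀ i₁ i₂) K) :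
    evalSingular f (liftOther g) = g := by
  induction g using MvPolynomial.induction_on with
  | C c =>
    rw [← algebraMap_eq, AlgHom.commutes, IsScalarTower.algebraMap_apply K (MvPolynomial ι K),
      algebraMap_eq, evalSingular_C, AlgHom.commutes]
  | add g h hg hh => rw [map_add, map_add, hg, hh]
  | mul_X g s hg =>
    rw [map_mul, map_mul, hg]
    rcases s with k | j
    · simp [liftOther, evalSingular_X]
    · rw [liftOther, aeval_X, Sum.elim_inr, evalSingular_C, aeval_X, singularParam_other]

theorem span_addLinear_eq_ker (h₀₁ : i₁ ≠ i₀) (h₀₂ : i₂ ≠ i₀) (h₁₂ : i₂ ≠ i₁) :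
    Ideal.span {addLinear f, pderiv 0 (addLinear f), pderiv 1 (addLinear f)} =
      RingHom.ker (evalSingular f) := by
  have a₀ := singularParam_const f
  have a₁ := singularParam_left f h₀₁
  have a₂ := singularParam_right f h₀₂ h₁₂
  apply le_antisymm
  · rw [Ideal.span_le]
    rintro g (rfl | rfl | rfl) <;> rw [SetLike.mem_coe, RingHom.mem_ker]
    · simp only [addLinear, map_add, map_mul, evalSingular_liftOther, evalSingular_C,
        evalSingular_X, aeval_X, a₀, a₁, a₂]
      ring
    · rw [pderiv_zero_addLinear, map_add, evalSingular_liftOther, evalSingular_C, aeval_X, a₁,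
        add_neg_cancel]
    · rw [pderiv_one_addLinear, map_add, evalSingular_liftOther, evalSingular_C, aeval_X, a₂,
        add_neg_cancel]
  · set I := Ideal.span {addLinear f, pderiv 0 (addLinear f), pderiv 1 (addLinear f)}
    have m₀ : addLinear f ∈ I := Ideal.subset_span (by simp)
    have m₁ : pderiv 0 (addLinear f) ∈ I := Ideal.subset_span (by simp)
    have m₂ : pderiv 1 (addLinear f) ∈ I := Ideal.subset_span (by simp)
    have key : ((Ideal.Quotient.mk I).comp (liftOther (K := K)).toRingHom).comp
        (evalSingular f) = Ideal.Quotient.mk I := by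
      refine MvPolynomial.ringHom_ext' (MvPolynomial.ringHom_ext' ?_ fun i => ?_) fun k => ?_
      · ext c
        simp only [RingHom.comp_apply, evalSingular_C]
        rw [← algebraMap_eq, AlgHom.commutes]
        simp only [AlgHom.toRingHom_eq_coe, RingHom.coe_coe, AlgHom.commutes]
        rfl
      · simp only [RingHom.comp_apply, evalSingular_C, aeval_X, AlgHom.toRingHom_eq_coe,
          RingHom.coe_coe]
        rw [Ideal.Quotient.eq]
        by_cases e₀ : i = i₀
        · rw [e₀, a₀]
          convert I.sub_mem (I.add_mem (I.mul_mem_left (X 0) m₁) (I.mul_mem_left (X 1) m₂)) m₀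
            using 1
          rw [pderiv_zero_addLinear, pderiv_one_addLinear, addLinear]
          simp only [map_sub, map_add, map_mul]
          simp only [liftOther, aeval_X, Sum.elim_inl]
          ring
        by_cases e₁ : i = i₁
        · rw [e₁, a₁]
          convert I.neg_mem m₁ using 1
          rw [pderiv_zero_addLinear, map_neg]
          ring
        by_cases e₂ : i = i₂
        · rw [e₂, a₂]
          convert I.neg_mem m₂ using 1
          rw [pderiv_one_addLinear, map_neg]
          ring
        · rw [singularParam_other f ⟨i, e₀, e₁, e₂⟩]
          simp [liftOther]
      · simp [evalSingular_X, liftOther]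
    intro g hg
    rw [← Ideal.Quotient.eq_zero_iff_mem, ← key, RingHom.comp_apply, RingHom.mem_ker.1 hg,
      map_zero]

theorem not_algebraicIndependent_singularParam [Fintype ι] (h₀₁ : i₁ ≠ i₀) (h₀₂ : i₂ ≠ i₀)
    (h₁₂ : i₂ ≠ i₁) : ¬ AlgebraicIndependent K (singularParam f) := by
  intro h
  have h1 := h.cardinalMk_le_trdeg
  rw [MvPolynomial.trdeg_of_isDomain, Cardinal.lift_id, Cardinal.mk_fintype,
    Cardinal.mk_fintype, Nat.cast_le, Fintype.card_sum, Fintype.card_fin] at h1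
  have h2 := sum_eq_add_sum_otherIdx h₀₁ h₀₂ h₁₂ fun _ => 1
  simp only [Finset.sum_const, Finset.card_univ, smul_eq_mul, mul_one] at h2
  omega

/-- If the Hessian determinant of `f` is nonzero, the coordinates of the generic singular point
are rational functions of the parameters. -/
theorem exists_aeval_singularParam_mul_X_eq [Fintype ι] [CharZero K]
    (h₀₁ : i₁ ≠ i₀) (h₀₂ : i₂ ≠ i₀) (h₁₂ : i₂ ≠ i₁)
    (hess : pderiv (.inl 0) (pderiv (.inl 0) f) * pderiv (.inl 1) (pderiv (.inl 1) f) -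
      pderiv (.inl 0) (pderiv (.inl 1) f) ^ 2 ≠ 0) :
    ∃ s r₁ r₂ : MvPolynomial ι K, aeval (singularParam f) s ≠ 0 ∧
      aeval (singularParam f) s * X (.inl 0) = aeval (singularParam f) r₁ ∧
      aeval (singularParam f) s * X (.inl 1) = aeval (singularParam f) r₂ := by
  have a₀ := singularParam_const f
  have a₁ := singularParam_left f h₀₁
  have a₂ := singularParam_right f h₀₂ h₁₂
  obtain ⟨D, hD, i, hi⟩ := exists_aeval_eq_zero_aeval_pderiv_ne_zero
    (not_algebraicIndependent_singularParam f h₀₁ h₀₂ h₁₂)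
  set e : ι → MvPolynomial (Fin 2 ⊕ otherIdx i₀ i₁ i₂) K :=
    fun i => aeval (singularParam f) (pderiv i D) with he
  have chain : ∀ s, ∑ i, e i * pderiv s (singularParam f i) = 0 := fun s => by
    rw [he, ← derivation_aeval_eq_sum (pderiv s) (singularParam f) D, hD, map_zero]
  have split : ∀ s, e i₀ * pderiv s (singularParam f i₀) + e i₁ * pderiv s (singularParam f i₁) +
      e i₂ * pderiv s (singularParam f i₂) +
      ∑ j : otherIdx i₀ i₁ i₂, e j.1 * pderiv s (X (.inr j)) = 0 := fun s => by
    rw [← chain s, sum_eq_add_sum_otherIdx h₀₁ h₀₂ h₁₂]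
    simp only [singularParam_other]
  have coord : ∀ k : Fin 2,
      (e i₁ - X (.inl 0) * e i₀) * pderiv (.inl k) (pderiv (.inl 0) f) +
      (e i₂ - X (.inl 1) * e i₀) * pderiv (.inl k) (pderiv (.inl 1) f) = 0 := fun k => by
    have h := split (.inl k)
    rw [Finset.sum_eq_zero fun j _ => by rw [pderiv_X_of_ne (by simp), mul_zero], a₀, a₁, a₂] at h
    simp only [map_neg, map_sub, map_add, pderiv_mul] at h
    fin_cases k <;> simp at h ⊢ <;> linear_combination -h
  have c₀ := coord 0
  have c₁ := coord 1
  rw [pderiv_comm (Sum.inl 1) (Sum.inl 0)] at c₁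
  have u₁ : e i₁ - X (.inl 0) * e i₀ = 0 := by
    refine (mul_eq_zero.1 ?_).resolve_right hess
    linear_combination pderiv (.inl 1) (pderiv (.inl 1) f) * c₀ -
      pderiv (.inl 0) (pderiv (.inl 1) f) * c₁
  have u₂ : e i₂ - X (.inl 1) * e i₀ = 0 := by
    refine (mul_eq_zero.1 ?_).resolve_right hess
    linear_combination pderiv (.inl 0) (pderiv (.inl 0) f) * c₁ -
      pderiv (.inl 0) (pderiv (.inl 1) f) * c₀
  refine ⟨pderiv i₀ D, pderiv i₁ D, pderiv i₂ D, fun h => hi ?_, ?_, ?_⟩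
  · change e i₀ = 0 at h
    change e i = 0
    rw [h, mul_zero, sub_zero] at u₁ u₂
    by_cases e₀ : i = i₀
    · rw [e₀, h]
    by_cases e₁ : i = i₁
    · rw [e₁, u₁]
    by_cases e₂ : i = i₂
    · rw [e₂, u₂]
    have h' := split (.inr ⟨i, e₀, e₁, e₂⟩)
    rw [Finset.sum_eq_single ⟨i, e₀, e₁, e₂⟩ (fun j _ hj => by
      rw [pderiv_X_of_ne (by simpa using hj), mul_zero]) (by simp), pderiv_X_self, h, u₁, u₂] at h'
    linear_combination h'
  · change e i₀ * _ = e i₁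
    linear_combination -u₁
  · change e i₀ * _ = e i₂
    linear_combination -u₂

/-- If the Hessian determinant of `f` is nonzero, every element of the coordinate ring of the generic
singular point is a fraction of polynomials in the parameters. -/
theorem exists_aeval_singularParam_mul_eq [Fintype ι] [CharZero K]
    (h₀₁ : i₁ ≠ i₀) (h₀₂ : i₂ ≠ i₀) (h₁₂ : i₂ ≠ i₁)
    (hess : pderiv (.inl 0) (pderiv (.inl 0) f) * pderiv (.inl 1) (pderiv (.inl 1) f) -
      pderiv (.inl 0) (pderiv (.inl 1) f) ^ 2 ≠ 0)
    (g : MvPolynomial (Fin 2 ⊕ otherIdx i₀ i₁ i₂) K) :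
    ∃ r s : MvPolynomial ι K, aeval (singularParam f) s ≠ 0 ∧
      aeval (singularParam f) s * g = aeval (singularParam f) r := by
  obtain ⟨s₀, r₁, r₂, hs₀, hr₁, hr₂⟩ :=
    exists_aeval_singularParam_mul_X_eq f h₀₁ h₀₂ h₁₂ hess
  induction g using MvPolynomial.induction_on with
  | C c => exact ⟨C c, 1, by simp, by simp⟩
  | add g h hg hh =>
    obtain ⟨r, s, hs, e⟩ := hg
    obtain ⟨r', s', hs', e'⟩ := hh
    refine ⟨r * s' + r' * s, s * s', by rw [map_mul]; exact mul_ne_zero hs hs', ?_⟩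
    simp only [map_mul, map_add]
    linear_combination aeval (singularParam f) s' * e + aeval (singularParam f) s * e'
  | mul_X g t hg =>
    obtain ⟨r, s, hs, e⟩ := hg
    obtain ⟨r', s', hs', e'⟩ : ∃ r' s' : MvPolynomial ι K, aeval (singularParam f) s' ≠ 0 ∧
        aeval (singularParam f) s' * X t = aeval (singularParam f) r' := by
      rcases t with k | j
      · fin_cases k
        · exact ⟨r₁, s₀, hs₀, hr₁⟩
        · exact ⟨r₂, s₀, hs₀, hr₂⟩
      · exact ⟨X j.1, 1, by simp, by rw [aeval_X, singularParam_other]; simp⟩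
    refine ⟨r * r', s * s', by rw [map_mul]; exact mul_ne_zero hs hs', ?_⟩
    simp only [map_mul]
    rw [← e, ← e']
    ring

end SingularPoint

section Weierstrass

variable (K : Type) [Field K] {p q : ℕ}

/-- The part of the generic Weierstraß polynomial without its constant and linear terms, in the
polynomial ring in the coordinates and the remaining parameters. -/
noncomputable def weierstrassTail (i₀ i₁ i₂ : idxSet p q) :
    MvPolynomial (Fin 2 ⊕ otherIdx i₀ i₁ i₂) K :=
  X (.inl 1) ^ p - X (.inl 0) ^ q +
    ∑ j : otherIdx i₀ i₁ i₂, X (.inr j) * X (.inl 0) ^ j.1.1.1 * X (.inl 1) ^ j.1.1.2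

theorem genF_eq_addLinear {i₀ i₁ i₂ : idxSet p q} (h₀ : i₀.1 = (0, 0)) (h₁ : i₁.1 = (1, 0))
    (h₂ : i₂.1 = (0, 1)) : genF K p q = addLinear (weierstrassTail K i₀ i₁ i₂) := by
  have h₀₁ : i₁ ≠ i₀ := fun h => by simp [← h, h₁] at h₀
  have h₀₂ : i₂ ≠ i₀ := fun h => by simp [← h, h₂] at h₀
  have h₁₂ : i₂ ≠ i₁ := fun h => by simp [← h, h₂] at h₁
  rw [genF, addLinear, sum_eq_add_sum_otherIdx h₀₁ h₀₂ h₁₂, h₀, h₁, h₂]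
  simp only [weierstrassTail, liftOther, map_add, map_sub, map_sum, map_mul, map_pow, aeval_X,
    Sum.elim_inl, Sum.elim_inr]
  ring

theorem hessian_weierstrassTail_ne_zero (hp : 1 < p) (hpq : p < q) {i₀ i₁ i₂ : idxSet p q}
    (h₀ : i₀.1 = (0, 0)) (h₁ : i₁.1 = (1, 0)) (h₂ : i₂.1 = (0, 1)) :
    pderiv (.inl 0) (pderiv (.inl 0) (weierstrassTail K i₀ i₁ i₂)) *
        pderiv (.inl 1) (pderiv (.inl 1) (weierstrassTail K i₀ i₁ i₂)) -
      pderiv (.inl 0) (pderiv (.inl 1) (weierstrassTail K i₀ i₁ i₂)) ^ 2 ≠ 0 := by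
  classical
  have hmem : (1, 1) ∈ idxSet p q := by
    simp only [idxSet, Finset.mem_filter, Finset.mem_product, Finset.mem_range]
    refine ⟨⟨by omega, hp⟩, ?_⟩
    nlinarith
  let j₀ : otherIdx i₀ i₁ i₂ := ⟨⟨(1, 1), hmem⟩, fun h => by simp [← h] at h₀,
    fun h => by simp [← h] at h₁, fun h => by simp [← h] at h₂⟩
  let c : otherIdx i₀ i₁ i₂ → K := Pi.single j₀ 1
  let φ : MvPolynomial (Fin 2 ⊕ otherIdx i₀ i₁ i₂) K →ₐ[K] MvPolynomial (Fin 2) K :=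
    aeval (Sum.elim X (C ∘ c))
  have hφ : φ (weierstrassTail K i₀ i₁ i₂) = X 1 ^ p - X 0 ^ q + X 0 * X 1 := by
    simp only [φ, weierstrassTail, map_add, map_sub, map_sum, map_mul, map_pow, aeval_X,
      Sum.elim_inl, Sum.elim_inr, Function.comp_apply, c]
    rw [Finset.sum_eq_single j₀ (fun j _ hj => by simp [hj]) (by simp)]
    simp [j₀]
  have hd : ∀ k g, φ (pderiv (.inl k) g) = pderiv k (φ g) := fun k g =>
    aeval_sumElim_pderiv_inl g c k
  intro h
  have h' := congrArg (fun g => eval (0 : Fin 2 → K) (φ g)) h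
  have hq2 : q - 1 - 1 ≠ 0 := by omega
  simp [hd, hφ, pderiv_X, hq2] at h'

end Weierstrass

/-- **Proposition 1.4.** `A = R[X,Y]/(F, F_X, F_Y)` is a domain and every element of `A`
becomes, after multiplication by a suitable nonzero element of the image `R′` of `R`,
an element of `R′`; i.e. `Q(R′) = Q(A)`. -/
theorem quotient_field_of_A_equals_quotient_field_of_R
    (K : Type) [Field K] [IsAlgClosed K] [CharZero K]
    (p q : ℕ) (hp : 1 < p) (hpq : p < q) (hco : Nat.Coprime p q) :
    IsDomain (genRing K p q ⧸
        Ideal.span {genF K p q, pderiv 0 (genF K p q), pderiv 1 (genF K p q)}) ∧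
    ∀ x : genRing K p q ⧸
        Ideal.span {genF K p q, pderiv 0 (genF K p q), pderiv 1 (genF K p q)},
      ∃ r s : coefRing K p q,
        algebraMap (coefRing K p q) (genRing K p q ⧸
          Ideal.span {genF K p q, pderiv 0 (genF K p q), pderiv 1 (genF K p q)}) s ≠ 0 ∧
        algebraMap (coefRing K p q) (genRing K p q ⧸
          Ideal.span {genF K p q, pderiv 0 (genF K p q), pderiv 1 (genF K p q)}) s * x =
        algebraMap (coefRing K p q) (genRing K p q ⧸
          Ideal.span {genF K p q, pderiv 0 (genF K p q), pderiv 1 (genF K p q)}) r := by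
  have hmem : ∀ ν μ, ν < q → μ < p → ν * p + μ * q < p * q → (ν, μ) ∈ idxSet p q := by
    intro ν μ hν hμ h
    simp only [idxSet, Finset.mem_filter, Finset.mem_product, Finset.mem_range]
    exact ⟨⟨hν, hμ⟩, h⟩
  let i₀ : idxSet p q := ⟨(0, 0), hmem 0 0 (by omega) (by omega) (by nlinarith)⟩
  let i₁ : idxSet p q := ⟨(1, 0), hmem 1 0 (by omega) (by omega) (by nlinarith)⟩
  let i₂ : idxSet p q := ⟨(0, 1), hmem 0 1 (by omega) (by omega) (by nlinarith)⟩
  have h₀₁ : i₁ ≠ i₀ := by simp [i₀, i₁]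
  have h₀₂ : i₂ ≠ i₀ := by simp [i₀, i₂]
  have h₁₂ : i₂ ≠ i₁ := by simp [i₁, i₂]
  have hess := hessian_weierstrassTail_ne_zero K hp hpq
    (i₀ := i₀) (i₁ := i₁) (i₂ := i₂) rfl rfl rfl
  have hF := genF_eq_addLinear K (i₀ := i₀) (i₁ := i₁) (i₂ := i₂) rfl rfl rfl
  have hker := span_addLinear_eq_ker (weierstrassTail K i₀ i₁ i₂) h₀₁ h₀₂ h₁₂
  rw [← hF] at hker
  generalize Ideal.span {genF K p q, pderiv 0 (genF K p q), pderiv 1 (genF K p q)} = I at hker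
  have hprime : I.IsPrime := hker ▸ RingHom.ker_isPrime _
  refine ⟨Ideal.Quotient.isDomain I, fun x => ?_⟩
  obtain ⟨g, rfl⟩ := Ideal.Quotient.mk_surjective x
  obtain ⟨r, s, hs, hr⟩ := exists_aeval_singularParam_mul_eq (weierstrassTail K i₀ i₁ i₂)
    h₀₁ h₀₂ h₁₂ hess (evalSingular _ g)
  have hmap : ∀ t : coefRing K p q,
      algebraMap (coefRing K p q) (genRing K p q ⧸ I) t = Ideal.Quotient.mk I (C t) := fun _ => rfl
  refine ⟨r, s, ?_, ?_⟩
  · rwa [hmap, Ne, Ideal.Quotient.eq_zero_iff_mem, hker, RingHom.mem_ker, evalSingular_C]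
  · rw [hmap, hmap, ← map_mul, Ideal.Quotient.eq, hker, RingHom.mem_ker, map_sub, map_mul,
      evalSingular_C, evalSingular_C, hr, sub_self]
end

section
/- Let α = (a_{νμ}) ∈ K^I be such that C_α is a nodal curve with exactly l ≥ 1 nodes (ξ_1,η_1),…,(ξ_l,η_l). Expand Δ as a polynomial in the shifted variables T_{νμ} = A_{νμ} − a_{νμ}. Then the nonzero homogeneous component of lowest degree of this expansion has degree l and is equal to e·∏_{i=1}^{l} L_i for some e ∈ K∖{0}, where L_i = Σ_{(ν,μ)∈I} ξ_i^ν η_i^μ T_{νμ}; moreover the linear forms L_1,…,L_l are linearly independent over K. -/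
open MvPolynomial

set_option synthInstance.maxHeartbeats 1000000
set_option maxHeartbeats 1000000

/-- The determinant `Δ ∈ R` of the `R`-linear endomorphism of `N = R[X,Y]/(F_X, F_Y)`
given by multiplication by the residue class of `F`. -/
noncomputable def genDelta (K : Type) [Field K] (p q : ℕ) : coefRing K p q :=
  LinearMap.det
    (LinearMap.mul (coefRing K p q)
      (genRing K p q ⧸ Ideal.span {pderiv 0 (genF K p q), pderiv 1 (genF K p q)})
      (Ideal.Quotient.mk (Ideal.span {pderiv 0 (genF K p q), pderiv 1 (genF K p q)})
        (genF K p q)))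

/-- The normed Weierstraß polynomial `F_a = Y^p − X^q + Σ a_νμ X^ν Y^μ ∈ K[X,Y]`. -/
noncomputable def wPoly (K : Type) [CommRing K] (p q : ℕ) (a : idxSet p q → K) :
    MvPolynomial (Fin 2) K :=
  X 1 ^ p - X 0 ^ q + ∑ i : idxSet p q, C (a i) * X 0 ^ (i : ℕ × ℕ).1 * X 1 ^ (i : ℕ × ℕ).2

/-- `P` is a singular point of the curve `G = 0`. -/
def IsSingAt (K : Type) [CommRing K] (G : MvPolynomial (Fin 2) K) (P : K × K) : Prop :=
  eval ![P.1, P.2] G = 0 ∧ eval ![P.1, P.2] (pderiv 0 G) = 0 ∧ eval ![P.1, P.2] (pderiv 1 G) = 0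


/-- The Hessian determinant `G_{XX} G_{YY} − G_{XY}²` of a polynomial in `X, Y`. -/
noncomputable def hessPoly (K : Type) [CommRing K] (G : MvPolynomial (Fin 2) K) :
    MvPolynomial (Fin 2) K :=
  pderiv 0 (pderiv 0 G) * pderiv 1 (pderiv 1 G) - (pderiv 0 (pderiv 1 G)) ^ 2

/-- `P` is a node of the curve `G = 0`. -/
def IsNodeAt (K : Type) [CommRing K] (G : MvPolynomial (Fin 2) K) (P : K × K) : Prop :=
  IsSingAt K G P ∧ eval ![P.1, P.2] (hessPoly K G) ≠ 0

/-- The linear form `L = Σ_{(ν,μ) ∈ I} ξ^ν η^μ T_νμ` attached to a point `(ξ,η)`. -/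
noncomputable def nodeLinForm (K : Type) [Field K] (p q : ℕ) (ξ η : K) : coefRing K p q :=
  ∑ j : idxSet p q, C (ξ ^ (j : ℕ × ℕ).1 * η ^ (j : ℕ × ℕ).2) * X j

/-- The weight `νp + μq` of the exponent `(ν, μ)`. -/
def expWeight (p q : ℕ) (d : Fin 2 →₀ ℕ) : ℕ := d 0 * p + d 1 * q

theorem expWeight_add (p q : ℕ) (d e : Fin 2 →₀ ℕ) :
    expWeight p q (d + e) = expWeight p q d + expWeight p q e := by
  simp only [expWeight, Finsupp.add_apply]; ring

section Support

open scoped Pointwise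

variable {S : Type} [CommRing S]

theorem mul_mem_restrictSupport {s t r : Set (Fin 2 →₀ ℕ)} {f g : MvPolynomial (Fin 2) S}
    (hf : f ∈ restrictSupport S s) (hg : g ∈ restrictSupport S t)
    (h : ∀ d ∈ s, ∀ e ∈ t, d + e ∈ r) : f * g ∈ restrictSupport S r := by
  have hfg : f * g ∈ restrictSupport S (s + t) := by
    rw [restrictSupport_add]; exact Submodule.mul_mem_mul hf hg
  refine restrictSupport_mono S ?_ hfg
  rintro _ ⟨d, hd, e, he, rfl⟩
  exact h d hd e he

theorem mem_restrictSupport_mono {s t : Set (Fin 2 →₀ ℕ)} {f : MvPolynomial (Fin 2) S}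
    (hf : f ∈ restrictSupport S s) (h : ∀ d ∈ s, d ∈ t) : f ∈ restrictSupport S t :=
  restrictSupport_mono S h hf

theorem coeff_eq_zero_of_mem_restrictSupport {s : Set (Fin 2 →₀ ℕ)} {f : MvPolynomial (Fin 2) S}
    (hf : f ∈ restrictSupport S s) {d : Fin 2 →₀ ℕ} (hd : d ∉ s) : coeff d f = 0 := by
  by_contra h
  exact hd ((mem_restrictSupport_iff S).1 hf (by simpa using h))

theorem mem_restrictSupport_of_coeff {s : Set (Fin 2 →₀ ℕ)} {f : MvPolynomial (Fin 2) S}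
    (h : ∀ d, coeff d f ≠ 0 → d ∈ s) : f ∈ restrictSupport S s :=
  (mem_restrictSupport_iff S).2 fun d hd => h d (by simpa using hd)

/-- If modulo `M` every monomial with exponent in `D` reduces to a combination of monomials with
exponents in `D` of smaller measure, then `M` contains everything supported in `D`. -/
theorem restrictSupport_le_of_reduction (D : Set (Fin 2 →₀ ℕ)) (m : (Fin 2 →₀ ℕ) → ℕ)
    (M : Submodule S (MvPolynomial (Fin 2) S))
    (h : ∀ d ∈ D, ∃ g ∈ restrictSupport S {e | e ∈ D ∧ m e < m d}, monomial d 1 - g ∈ M) :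
    restrictSupport S D ≤ M := by
  have key : ∀ n, ∀ d ∈ D, m d = n → monomial d (1 : S) ∈ M := by
    intro n
    induction n using Nat.strong_induction_on with
    | _ n ih =>
      rintro d hd rfl
      obtain ⟨g, hg, hgM⟩ := h d hd
      have hle : restrictSupport S {e | e ∈ D ∧ m e < m d} ≤ M := by
        rw [restrictSupport_eq_span, Submodule.span_le]
        rintro _ ⟨e, ⟨he, hlt⟩, rfl⟩
        exact ih _ hlt e he rfl
      simpa using M.add_mem hgM (hle hg)
  rw [restrictSupport_eq_span, Submodule.span_le]
  rintro _ ⟨e, he, rfl⟩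
  exact key _ e he rfl

theorem X_pow_eq_monomial_one (i : Fin 2) (n : ℕ) :
    (X i ^ n : MvPolynomial (Fin 2) S) = monomial (Finsupp.single i n) 1 := by
  rw [X_pow_eq_monomial]

theorem X_pow_mul_X_pow (m n : ℕ) :
    (X 0 ^ m * X 1 ^ n : MvPolynomial (Fin 2) S) =
      monomial (Finsupp.single 0 m + Finsupp.single 1 n) 1 := by
  rw [X_pow_eq_monomial_one, X_pow_eq_monomial_one, monomial_mul, one_mul]

end Support

section Jacobian

variable {S : Type} [CommRing S] {p q : ℕ}

/-- The part of the Weierstraß polynomial of weight less than `pq`. -/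
noncomputable def wLow (a : idxSet p q → S) : MvPolynomial (Fin 2) S :=
  ∑ i : idxSet p q, C (a i) * X 0 ^ (i : ℕ × ℕ).1 * X 1 ^ (i : ℕ × ℕ).2

theorem wPoly_eq (a : idxSet p q → S) : wPoly S p q a = X 1 ^ p - X 0 ^ q + wLow a := rfl

theorem idxSet_weight_lt (i : idxSet p q) :
    (i : ℕ × ℕ).1 * p + (i : ℕ × ℕ).2 * q < p * q := by
  have := i.2
  simp only [idxSet, Finset.mem_filter] at this
  exact this.2

theorem wLow_mem (a : idxSet p q → S) :
    wLow a ∈ restrictSupport S {d | expWeight p q d < p * q} := by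
  refine Submodule.sum_mem _ fun i _ => ?_
  rw [mul_assoc, X_pow_mul_X_pow, ← smul_eq_C_mul]
  refine Submodule.smul_mem _ _ ?_
  rw [monomial_mem_restrictSupport]
  left
  simpa [expWeight] using idxSet_weight_lt i

theorem pderiv_mem_restrictSupport (i : Fin 2) {s t : Set (Fin 2 →₀ ℕ)}
    {f : MvPolynomial (Fin 2) S} (hf : f ∈ restrictSupport S s)
    (h : ∀ d, d + Finsupp.single i 1 ∈ s → d ∈ t) : pderiv i f ∈ restrictSupport S t := by
  refine mem_restrictSupport_of_coeff fun d hd => h d ?_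
  by_contra hn
  apply hd
  rw [coeff_pderiv, coeff_eq_zero_of_mem_restrictSupport hf hn, zero_mul]

theorem pderiv_zero_wPoly (a : idxSet p q → S) :
    pderiv 0 (wPoly S p q a) = - C (q : S) * X 0 ^ (q - 1) + pderiv 0 (wLow a) := by
  simp [wPoly_eq]

theorem pderiv_one_wPoly (a : idxSet p q → S) :
    pderiv 1 (wPoly S p q a) = C (p : S) * X 1 ^ (p - 1) + pderiv 1 (wLow a) := by
  simp [wPoly_eq]

theorem pderiv_zero_wLow_mem (a : idxSet p q → S) (hq : 1 ≤ q) :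
    pderiv 0 (wLow a) ∈ restrictSupport S {d | expWeight p q d < (q - 1) * p} := by
  refine pderiv_mem_restrictSupport 0 (wLow_mem a) fun d hd => ?_
  obtain ⟨k, rfl⟩ := Nat.exists_eq_add_of_le' hq
  simp only [Set.mem_ofPred_eq, expWeight_add] at hd ⊢
  simp only [expWeight, Nat.add_sub_cancel] at hd ⊢
  simp at hd
  nlinarith

theorem pderiv_one_wLow_mem (a : idxSet p q → S) (hp : 1 ≤ p) :
    pderiv 1 (wLow a) ∈ restrictSupport S {d | expWeight p q d < (p - 1) * q} := by
  refine pderiv_mem_restrictSupport 1 (wLow_mem a) fun d hd => ?_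
  obtain ⟨k, rfl⟩ := Nat.exists_eq_add_of_le' hp
  simp only [Set.mem_ofPred_eq, expWeight_add] at hd ⊢
  simp only [expWeight, Nat.add_sub_cancel] at hd ⊢
  simp at hd
  nlinarith

/-- The exponents `(ν, μ)` with `ν < q - 1` and `μ < p - 1`. -/
def boxSet (p q : ℕ) : Set (Fin 2 →₀ ℕ) := {d | d 0 < q - 1 ∧ d 1 < p - 1}

theorem exists_mul_natCast_eq_one [Algebra ℚ S] {n : ℕ} (hn : 1 ≤ n) : ∃ r : S, r * (n : S) = 1 := by
  refine ⟨algebraMap ℚ S (n : ℚ)⁻¹, ?_⟩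
  have hn' : (n : ℚ) ≠ 0 := by positivity
  rw [← map_natCast (algebraMap ℚ S) n, ← map_mul, inv_mul_cancel₀ hn', map_one]

theorem monomial_sub_single (i : Fin 2) {d : Fin 2 →₀ ℕ} {n : ℕ} (h : n ≤ d i) :
    monomial d (1 : S) = monomial (d - Finsupp.single i n) 1 * X i ^ n := by
  rw [X_pow_eq_monomial_one, monomial_mul, one_mul,
    tsub_add_cancel_of_le (Finsupp.single_le_iff.2 h)]

theorem expWeight_sub_single_zero {d : Fin 2 →₀ ℕ} {n : ℕ} (h : n ≤ d 0) :
    expWeight p q (d - Finsupp.single 0 n) + n * p = expWeight p q d := by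
  obtain ⟨k, hk⟩ := Nat.exists_eq_add_of_le' h
  simp [expWeight, hk]; ring

theorem expWeight_sub_single_one {d : Fin 2 →₀ ℕ} {n : ℕ} (h : n ≤ d 1) :
    expWeight p q (d - Finsupp.single 1 n) + n * q = expWeight p q d := by
  obtain ⟨k, hk⟩ := Nat.exists_eq_add_of_le' h
  simp [expWeight, hk]; ring

theorem reduction_pderiv_zero [Algebra ℚ S] (hq : 1 ≤ q) (a : idxSet p q → S)
    {d : Fin 2 →₀ ℕ} (h : q - 1 ≤ d 0) :
    ∃ g ∈ restrictSupport S {e | expWeight p q e < expWeight p q d},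
    ∃ u ∈ restrictSupport S {e | expWeight p q e + (q - 1) * p = expWeight p q d},
      monomial d 1 - g = u * pderiv 0 (wPoly S p q a) := by
  obtain ⟨r, hr⟩ := exists_mul_natCast_eq_one (S := S) hq
  have hw := expWeight_sub_single_zero (p := p) (q := q) h
  refine ⟨r • (monomial (d - Finsupp.single 0 (q - 1)) 1 * pderiv 0 (wLow a)),
    Submodule.smul_mem _ _ ?_, -r • monomial (d - Finsupp.single 0 (q - 1)) 1,
    Submodule.smul_mem _ _ ?_, ?_⟩
  · refine mul_mem_restrictSupport (s := {d - Finsupp.single 0 (q - 1)})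
      (by simp) (pderiv_zero_wLow_mem a hq) ?_
    rintro _ rfl e he
    simp only [Set.mem_ofPred_eq, expWeight_add] at he ⊢
    omega
  · rw [monomial_mem_restrictSupport]
    exact Or.inl hw
  · have hC : (C r : MvPolynomial (Fin 2) S) * C (q : S) = 1 := by rw [← C_mul, hr, C_1]
    rw [monomial_sub_single 0 h, pderiv_zero_wPoly, smul_eq_C_mul, smul_eq_C_mul, C_neg]
    linear_combination (-(monomial (d - Finsupp.single 0 (q - 1)) 1 * X 0 ^ (q - 1))) * hC

theorem reduction_pderiv_one [Algebra ℚ S] (hp : 1 ≤ p) (a : idxSet p q → S)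
    {d : Fin 2 →₀ ℕ} (h : p - 1 ≤ d 1) :
    ∃ g ∈ restrictSupport S {e | expWeight p q e < expWeight p q d},
    ∃ v ∈ restrictSupport S {e | e 0 = d 0 ∧ expWeight p q e + (p - 1) * q = expWeight p q d},
      monomial d 1 - g = v * pderiv 1 (wPoly S p q a) := by
  obtain ⟨r, hr⟩ := exists_mul_natCast_eq_one (S := S) hp
  have hw := expWeight_sub_single_one (p := p) (q := q) h
  refine ⟨-r • (monomial (d - Finsupp.single 1 (p - 1)) 1 * pderiv 1 (wLow a)),
    Submodule.smul_mem _ _ ?_, r • monomial (d - Finsupp.single 1 (p - 1)) 1,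
    Submodule.smul_mem _ _ ?_, ?_⟩
  · refine mul_mem_restrictSupport (s := {d - Finsupp.single 1 (p - 1)})
      (by simp) (pderiv_one_wLow_mem a hp) ?_
    rintro _ rfl e he
    simp only [Set.mem_ofPred_eq, expWeight_add] at he ⊢
    omega
  · rw [monomial_mem_restrictSupport]
    exact Or.inl ⟨by rw [Finsupp.tsub_apply]; simp, hw⟩
  · have hC : (C r : MvPolynomial (Fin 2) S) * C (p : S) = 1 := by rw [← C_mul, hr, C_1]
    rw [monomial_sub_single 1 h, pderiv_one_wPoly, smul_eq_C_mul, smul_eq_C_mul, C_neg]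
    linear_combination (-(monomial (d - Finsupp.single 1 (p - 1)) 1 * X 1 ^ (p - 1))) * hC

/-- Weighted division by the two partial derivatives of a Weierstraß polynomial. -/
theorem exists_rep_pderiv [Algebra ℚ S] (hp : 1 ≤ p) (hq : 1 ≤ q) (a : idxSet p q → S) (w : ℕ)
    {f : MvPolynomial (Fin 2) S} (hf : f ∈ restrictSupport S {d | expWeight p q d ≤ w}) :
    ∃ r ∈ restrictSupport S {d | d ∈ boxSet p q ∧ expWeight p q d ≤ w},
    ∃ u ∈ restrictSupport S {d | expWeight p q d + (q - 1) * p ≤ w},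
    ∃ v ∈ restrictSupport S {d | expWeight p q d + (p - 1) * q ≤ w},
      f = r + u * pderiv 0 (wPoly S p q a) + v * pderiv 1 (wPoly S p q a) := by
  set FX := pderiv 0 (wPoly S p q a) with hFX
  set FY := pderiv 1 (wPoly S p q a) with hFY
  set M : Submodule S (MvPolynomial (Fin 2) S) :=
    restrictSupport S {d | d ∈ boxSet p q ∧ expWeight p q d ≤ w} ⊔
    (restrictSupport S {d | expWeight p q d + (q - 1) * p ≤ w}).map (LinearMap.mulRight S FX) ⊔
    (restrictSupport S {d | expWeight p q d + (p - 1) * q ≤ w}).map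
      (LinearMap.mulRight S FY) with hM
  suffices hle : restrictSupport S {d | expWeight p q d ≤ w} ≤ M by
    obtain ⟨x, hx, _, ⟨v, hv, rfl⟩, rfl⟩ := Submodule.mem_sup.1 (hle hf)
    obtain ⟨r, hr, _, ⟨u, hu, rfl⟩, rfl⟩ := Submodule.mem_sup.1 hx
    exact ⟨r, hr, u, hu, v, hv, rfl⟩
  refine restrictSupport_le_of_reduction _ (expWeight p q) M fun d hd => ?_
  rw [Set.mem_ofPred_eq] at hd
  by_cases h0 : q - 1 ≤ d 0
  · obtain ⟨g, hg, u, hu, h⟩ := reduction_pderiv_zero hq a h0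
    refine ⟨g, mem_restrictSupport_mono hg (fun e he => ⟨(le_of_lt he).trans hd, he⟩),
      Submodule.mem_sup_left (Submodule.mem_sup_right ⟨u, ?_, h.symm⟩)⟩
    exact mem_restrictSupport_mono hu (fun e he => (le_of_eq he).trans hd)
  by_cases h1 : p - 1 ≤ d 1
  · obtain ⟨g, hg, v, hv, h⟩ := reduction_pderiv_one hp a h1
    refine ⟨g, mem_restrictSupport_mono hg (fun e he => ⟨(le_of_lt he).trans hd, he⟩),
      Submodule.mem_sup_right ⟨v, ?_, h.symm⟩⟩
    exact mem_restrictSupport_mono hv (fun e he => (le_of_eq he.2).trans hd)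
  · refine ⟨0, Submodule.zero_mem _, Submodule.mem_sup_left (Submodule.mem_sup_left ?_)⟩
    rw [sub_zero, monomial_mem_restrictSupport]
    exact Or.inl ⟨⟨by omega, by omega⟩, hd⟩

theorem exists_rep_pderiv_zero [Algebra ℚ S] (hq : 1 ≤ q) (a : idxSet p q → S)
    (f : MvPolynomial (Fin 2) S) :
    ∃ u, ∃ v ∈ restrictSupport S {d | d 0 < q - 1}, f = u * pderiv 0 (wPoly S p q a) + v := by
  set FX := pderiv 0 (wPoly S p q a) with hFX
  have hle : restrictSupport S Set.univ ≤
      LinearMap.range (LinearMap.mulRight S FX) ⊔ restrictSupport S {d | d 0 < q - 1} := by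
    refine restrictSupport_le_of_reduction _ (expWeight p q) _ fun d _ => ?_
    by_cases h0 : q - 1 ≤ d 0
    · obtain ⟨g, hg, u, -, h⟩ := reduction_pderiv_zero hq a h0
      exact ⟨g, mem_restrictSupport_mono hg (fun e he => ⟨trivial, he⟩),
        Submodule.mem_sup_left ⟨u, h.symm⟩⟩
    · refine ⟨0, Submodule.zero_mem _, Submodule.mem_sup_right ?_⟩
      rw [sub_zero, monomial_mem_restrictSupport]
      exact Or.inl (not_le.1 h0)
  obtain ⟨_, ⟨u, rfl⟩, v, hv, h⟩ := Submodule.mem_sup.1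
    (hle (show f ∈ restrictSupport S Set.univ by simp))
  exact ⟨u, v, hv, h.symm⟩

theorem eq_zero_of_rep_eq_zero [Algebra ℚ S] (hp : 1 ≤ p) (hq : 1 ≤ q) (a : idxSet p q → S)
    {r u v : MvPolynomial (Fin 2) S} (hr : r ∈ restrictSupport S (boxSet p q))
    (hv : v ∈ restrictSupport S {d | d 0 < q - 1})
    (h : r + u * pderiv 0 (wPoly S p q a) + v * pderiv 1 (wPoly S p q a) = 0) : r = 0 := by
  obtain ⟨ip, hip⟩ := exists_mul_natCast_eq_one (S := S) hp
  obtain ⟨iq, hiq⟩ := exists_mul_natCast_eq_one (S := S) hq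
  have key : ∀ w : ℕ, r ∈ restrictSupport S {d | expWeight p q d < w} →
      u ∈ restrictSupport S {d | expWeight p q d + (q - 1) * p < w} →
      v ∈ restrictSupport S {d | expWeight p q d + (p - 1) * q < w} → r = 0 := by
    intro w
    induction w with
    | zero =>
      intro h1 _ _
      ext d
      rw [coeff_eq_zero_of_mem_restrictSupport h1 (by simp), coeff_zero]
    | succ w ih =>
      intro h1 h2 h3
      set E := r - C (q : S) * (u * X 0 ^ (q - 1)) + C (p : S) * (v * X 1 ^ (p - 1)) with hE
      have hEmem : E ∈ restrictSupport S {d | expWeight p q d < w} := by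
        have : E = -(u * pderiv 0 (wLow a) + v * pderiv 1 (wLow a)) := by
          rw [pderiv_zero_wPoly, pderiv_one_wPoly] at h
          rw [hE]
          linear_combination h
        rw [this]
        refine Submodule.neg_mem _ (Submodule.add_mem _ ?_ ?_)
        · refine mul_mem_restrictSupport h2 (pderiv_zero_wLow_mem a hq) fun d hd e he => ?_
          simp only [Set.mem_ofPred_eq, expWeight_add] at hd he ⊢
          omega
        · refine mul_mem_restrictSupport h3 (pderiv_one_wLow_mem a hp) fun d hd e he => ?_
          simp only [Set.mem_ofPred_eq, expWeight_add] at hd he ⊢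
          omega
      have hEcoeff : ∀ d, coeff d E = coeff d r
          - (q : S) * (if q - 1 ≤ d 0 then coeff (d - Finsupp.single 0 (q - 1)) u else 0)
          + (p : S) * (if p - 1 ≤ d 1 then coeff (d - Finsupp.single 1 (p - 1)) v else 0) := by
        intro d
        rw [hE, coeff_add, coeff_sub, coeff_C_mul, coeff_C_mul, X_pow_eq_monomial_one,
          X_pow_eq_monomial_one, coeff_mul_monomial', coeff_mul_monomial']
        simp only [Finsupp.single_le_iff, mul_one]
      refine ih ?_ ?_ ?_
      · refine mem_restrictSupport_of_coeff fun d hd => ?_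
        by_contra hlt
        have hb : d ∈ boxSet p q := by
          by_contra hb; exact hd (coeff_eq_zero_of_mem_restrictSupport hr hb)
        have := hEcoeff d
        rw [coeff_eq_zero_of_mem_restrictSupport hEmem hlt, if_neg (not_le.2 hb.1),
          if_neg (not_le.2 hb.2)] at this
        exact hd (by simpa using this.symm)
      · refine mem_restrictSupport_of_coeff fun d hd => ?_
        by_contra hlt
        rw [Set.mem_ofPred_eq] at hlt
        have := hEcoeff (d + Finsupp.single 0 (q - 1))
        rw [coeff_eq_zero_of_mem_restrictSupport hEmem, coeff_eq_zero_of_mem_restrictSupport hr,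
          if_pos (by simp), add_tsub_cancel_right] at this
        · have hv0 : (if p - 1 ≤ (d + Finsupp.single 0 (q - 1) : Fin 2 →₀ ℕ) 1 then
              coeff (d + Finsupp.single 0 (q - 1) - Finsupp.single 1 (p - 1)) v else 0) = 0 := by
            split_ifs
            · exact coeff_eq_zero_of_mem_restrictSupport hv (by simp)
            · rfl
          rw [hv0] at this
          exact hd (by linear_combination iq * this - coeff d u * hiq)
        · simp [boxSet]
        · simp only [Set.mem_ofPred_eq, expWeight_add] at hlt ⊢
          simp [expWeight] at hlt ⊢
          omega
      · refine mem_restrictSupport_of_coeff fun d hd => ?_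
        by_contra hlt
        have hd0 : d 0 < q - 1 := by
          by_contra hb; exact hd (coeff_eq_zero_of_mem_restrictSupport hv hb)
        rw [Set.mem_ofPred_eq] at hlt
        have := hEcoeff (d + Finsupp.single 1 (p - 1))
        rw [coeff_eq_zero_of_mem_restrictSupport hEmem, coeff_eq_zero_of_mem_restrictSupport hr,
          if_neg (not_le.2 (by rw [Finsupp.add_apply]; simpa using hd0)), if_pos (by simp), add_tsub_cancel_right] at this
        · exact hd (by linear_combination (-ip) * this - coeff d v * hip)
        · simp [boxSet]
        · simp only [Set.mem_ofPred_eq, expWeight_add] at hlt ⊢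
          simp [expWeight] at hlt ⊢
          omega
  have hbound : ∀ (f : MvPolynomial (Fin 2) S), ∃ w, ∀ d, coeff d f ≠ 0 → expWeight p q d < w := by
    intro f
    refine ⟨f.support.sup (expWeight p q) + 1, fun d hd => Nat.lt_succ_of_le ?_⟩
    exact Finset.le_sup (f := expWeight p q) (by simpa using hd)
  obtain ⟨w1, hw1⟩ := hbound r
  obtain ⟨w2, hw2⟩ := hbound u
  obtain ⟨w3, hw3⟩ := hbound v
  refine key (w1 + w2 + w3 + (q - 1) * p + (p - 1) * q) ?_ ?_ ?_ <;>
    refine mem_restrictSupport_of_coeff fun d hd => ?_ <;> rw [Set.mem_ofPred_eq]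
  · have := hw1 d hd; omega
  · have := hw2 d hd; omega
  · have := hw3 d hd; omega

end Jacobian

section JacobianAlgebra

variable {S : Type} [CommRing S] {p q : ℕ}

/-- The ideal generated by the partial derivatives of a Weierstraß polynomial. -/
noncomputable abbrev jacIdeal (a : idxSet p q → S) : Ideal (MvPolynomial (Fin 2) S) :=
  Ideal.span {pderiv 0 (wPoly S p q a), pderiv 1 (wPoly S p q a)}

theorem mem_jacIdeal {a : idxSet p q → S} {f : MvPolynomial (Fin 2) S} :
    f ∈ jacIdeal a ↔
      ∃ u v, u * pderiv 0 (wPoly S p q a) + v * pderiv 1 (wPoly S p q a) = f :=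
  Ideal.mem_span_pair

/-- The index type of the monomial basis of the Jacobian algebra. -/
abbrev BoxIdx (p q : ℕ) : Type := Fin (q - 1) × Fin (p - 1)

/-- The exponent attached to an element of the box. -/
noncomputable def boxExp (i : BoxIdx p q) : Fin 2 →₀ ℕ :=
  Finsupp.single 0 (i.1 : ℕ) + Finsupp.single 1 (i.2 : ℕ)

@[simp] theorem boxExp_zero (i : BoxIdx p q) : boxExp i 0 = i.1 := by simp [boxExp]

@[simp] theorem boxExp_one (i : BoxIdx p q) : boxExp i 1 = i.2 := by simp [boxExp]

theorem boxExp_injective : Function.Injective (boxExp : BoxIdx p q → Fin 2 →₀ ℕ) := by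
  intro i j h
  have h0 := DFunLike.congr_fun h 0
  have h1 := DFunLike.congr_fun h 1
  simp only [boxExp_zero, boxExp_one] at h0 h1
  exact Prod.ext (Fin.ext h0) (Fin.ext h1)

theorem boxExp_mem (i : BoxIdx p q) : boxExp i ∈ boxSet p q := by
  constructor
  · rw [boxExp_zero]; exact i.1.2
  · rw [boxExp_one]; exact i.2.2

theorem exists_boxExp_eq {d : Fin 2 →₀ ℕ} (hd : d ∈ boxSet p q) :
    ∃ i : BoxIdx p q, boxExp i = d := by
  refine ⟨(⟨d 0, hd.1⟩, ⟨d 1, hd.2⟩), ?_⟩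
  ext k
  fin_cases k <;> simp

/-- The polynomial with prescribed coefficients in the box. -/
noncomputable def boxPoly (c : BoxIdx p q → S) : MvPolynomial (Fin 2) S :=
  ∑ i, C (c i) * monomial (boxExp i) 1

theorem coeff_boxPoly (c : BoxIdx p q → S) (i : BoxIdx p q) :
    coeff (boxExp i) (boxPoly c) = c i := by
  classical
  simp [boxPoly, coeff_sum, coeff_C_mul, coeff_monomial, boxExp_injective.eq_iff]

theorem coeff_boxPoly_of_notMem (c : BoxIdx p q → S) {d : Fin 2 →₀ ℕ} (hd : d ∉ boxSet p q) :
    coeff d (boxPoly c) = 0 := by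
  classical
  simp only [boxPoly, coeff_sum, coeff_C_mul, coeff_monomial]
  refine Finset.sum_eq_zero fun i _ => ?_
  have hi : boxExp i ≠ d := fun h => hd (h ▸ boxExp_mem i)
  rw [if_neg hi, mul_zero]

theorem boxPoly_mem (c : BoxIdx p q → S) : boxPoly c ∈ restrictSupport S (boxSet p q) :=
  mem_restrictSupport_of_coeff fun _ hd => by
    by_contra h; exact hd (coeff_boxPoly_of_notMem c h)

theorem eq_boxPoly {r : MvPolynomial (Fin 2) S} (hr : r ∈ restrictSupport S (boxSet p q)) :
    r = boxPoly fun i : BoxIdx p q => coeff (boxExp i) r := by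
  ext d
  by_cases hd : d ∈ boxSet p q
  · obtain ⟨i, rfl⟩ := exists_boxExp_eq hd
    rw [coeff_boxPoly]
  · rw [coeff_boxPoly_of_notMem _ hd, coeff_eq_zero_of_mem_restrictSupport hr hd]

theorem eq_zero_of_boxPoly_mem [Algebra ℚ S] (hp : 1 ≤ p) (hq : 1 ≤ q) (a : idxSet p q → S)
    {c : BoxIdx p q → S} (h : boxPoly c ∈ jacIdeal a) : c = 0 := by
  obtain ⟨u, v, huv⟩ := mem_jacIdeal.1 h
  obtain ⟨v1, v0, hv0, hv⟩ := exists_rep_pderiv_zero hq a v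
  have hc : boxPoly c = 0 := by
    refine eq_zero_of_rep_eq_zero hp hq a (u := -(u + v1 * pderiv 1 (wPoly S p q a))) (v := -v0)
      (boxPoly_mem c) (Submodule.neg_mem _ hv0) ?_
    linear_combination -huv + hv * pderiv 1 (wPoly S p q a)
  funext i
  rw [← coeff_boxPoly c i, hc, coeff_zero, Pi.zero_apply]

theorem mk_boxPoly (a : idxSet p q → S) (c : BoxIdx p q → S) :
    Ideal.Quotient.mk (jacIdeal a) (boxPoly c) =
      ∑ i, c i • Ideal.Quotient.mk (jacIdeal a) (monomial (boxExp i) 1) := by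
  rw [boxPoly, map_sum]
  refine Finset.sum_congr rfl fun i _ => ?_
  rw [← smul_eq_C_mul, ← Ideal.Quotient.mkₐ_eq_mk S, map_smul]

theorem exists_mem_restrictSupport_le (p q : ℕ) (f : MvPolynomial (Fin 2) S) :
    ∃ w, f ∈ restrictSupport S {d | expWeight p q d ≤ w} :=
  ⟨f.support.sup (expWeight p q), mem_restrictSupport_of_coeff fun d hd =>
    Finset.le_sup (f := expWeight p q) (by simpa using hd)⟩

/-- The monomial basis of the Jacobian algebra of a Weierstraß polynomial. -/
noncomputable def jacBasis [Algebra ℚ S] (hp : 1 ≤ p) (hq : 1 ≤ q) (a : idxSet p q → S) :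
    Module.Basis (BoxIdx p q) S (MvPolynomial (Fin 2) S ⧸ jacIdeal a) :=
  Module.Basis.mk (v := fun i => Ideal.Quotient.mk (jacIdeal a) (monomial (boxExp i) 1))
    (by
      rw [Fintype.linearIndependent_iff]
      intro c hc i
      rw [← mk_boxPoly, Ideal.Quotient.eq_zero_iff_mem] at hc
      rw [eq_zero_of_boxPoly_mem hp hq a hc, Pi.zero_apply])
    (by
      rintro x -
      obtain ⟨f, rfl⟩ := Ideal.Quotient.mk_surjective x
      obtain ⟨w, hw⟩ := exists_mem_restrictSupport_le p q f
      obtain ⟨r, hr, u, -, v, -, hf⟩ := exists_rep_pderiv hp hq a w hw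
      have hfr : Ideal.Quotient.mk (jacIdeal a) f = Ideal.Quotient.mk (jacIdeal a) r := by
        rw [Ideal.Quotient.eq]
        exact mem_jacIdeal.2 ⟨u, v, by rw [hf]; ring⟩
      rw [hfr, eq_boxPoly (mem_restrictSupport_mono hr fun d hd => hd.1), mk_boxPoly]
      exact Submodule.sum_mem _ fun i _ => Submodule.smul_mem _ _ (Submodule.subset_span ⟨i, rfl⟩))

theorem jacBasis_apply [Algebra ℚ S] (hp : 1 ≤ p) (hq : 1 ≤ q) (a : idxSet p q → S)
    (i : BoxIdx p q) :
    jacBasis hp hq a i = Ideal.Quotient.mk (jacIdeal a) (monomial (boxExp i) 1) := by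
  rw [jacBasis, Module.Basis.mk_apply]

theorem mk_boxPoly_repr [Algebra ℚ S] (hp : 1 ≤ p) (hq : 1 ≤ q) (a : idxSet p q → S)
    (x : MvPolynomial (Fin 2) S ⧸ jacIdeal a) :
    Ideal.Quotient.mk (jacIdeal a) (boxPoly ((jacBasis hp hq a).repr x)) = x := by
  rw [mk_boxPoly]
  simp_rw [← jacBasis_apply hp hq a]
  exact (jacBasis hp hq a).sum_repr x

theorem repr_mk_eq [Algebra ℚ S] (hp : 1 ≤ p) (hq : 1 ≤ q) (a : idxSet p q → S)
    {f : MvPolynomial (Fin 2) S} {c : BoxIdx p q → S} (h : f - boxPoly c ∈ jacIdeal a) :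
    ⇑((jacBasis hp hq a).repr (Ideal.Quotient.mk (jacIdeal a) f)) = c := by
  rw [(Ideal.Quotient.eq).2 h, mk_boxPoly]
  simp_rw [← jacBasis_apply hp hq a]
  exact (jacBasis hp hq a).repr_sum_self c

/-- Multiplication by the residue class of the Weierstraß polynomial on its Jacobian algebra. -/
noncomputable def jacMul (a : idxSet p q → S) :
    (MvPolynomial (Fin 2) S ⧸ jacIdeal a) →ₗ[S] (MvPolynomial (Fin 2) S ⧸ jacIdeal a) :=
  LinearMap.mul S _ (Ideal.Quotient.mk (jacIdeal a) (wPoly S p q a))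

theorem jacMul_mk (a : idxSet p q → S) (f : MvPolynomial (Fin 2) S) :
    jacMul a (Ideal.Quotient.mk (jacIdeal a) f) =
      Ideal.Quotient.mk (jacIdeal a) (wPoly S p q a * f) := by
  rw [jacMul, LinearMap.mul_apply', map_mul]

/-- The matrix of `jacMul` in the monomial basis. -/
noncomputable def jacMatrix [Algebra ℚ S] (hp : 1 ≤ p) (hq : 1 ≤ q) (a : idxSet p q → S) :
    Matrix (BoxIdx p q) (BoxIdx p q) S :=
  LinearMap.toMatrix (jacBasis hp hq a) (jacBasis hp hq a) (jacMul a)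

theorem jacMatrix_spec [Algebra ℚ S] (hp : 1 ≤ p) (hq : 1 ≤ q) (a : idxSet p q → S)
    (j : BoxIdx p q) :
    wPoly S p q a * monomial (boxExp j) 1 - boxPoly (fun i => jacMatrix hp hq a i j) ∈
      jacIdeal a := by
  rw [← Ideal.Quotient.eq, ← jacMul_mk, ← jacBasis_apply hp hq a]
  have : (fun i => jacMatrix hp hq a i j) =
      (jacBasis hp hq a).repr (jacMul a (jacBasis hp hq a j)) := by
    funext i
    rw [jacMatrix, LinearMap.toMatrix_apply]
  rw [this, mk_boxPoly_repr]

variable {S' : Type} [CommRing S'] (φ : S →+* S')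

theorem map_wPoly (a : idxSet p q → S) :
    map φ (wPoly S p q a) = wPoly S' p q (fun i => φ (a i)) := by
  simp [wPoly]

theorem map_boxPoly (c : BoxIdx p q → S) : map φ (boxPoly c) = boxPoly fun i => φ (c i) := by
  simp [boxPoly]

theorem map_mem_jacIdeal {a : idxSet p q → S} {f : MvPolynomial (Fin 2) S}
    (hf : f ∈ jacIdeal a) : map φ f ∈ jacIdeal fun i => φ (a i) := by
  obtain ⟨u, v, rfl⟩ := mem_jacIdeal.1 hf
  refine mem_jacIdeal.2 ⟨map φ u, map φ v, ?_⟩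
  rw [← map_wPoly, pderiv_map, pderiv_map, map_add, map_mul, map_mul]

theorem jacMatrix_map [Algebra ℚ S] [Algebra ℚ S'] (hp : 1 ≤ p) (hq : 1 ≤ q)
    (a : idxSet p q → S) :
    (jacMatrix hp hq a).map φ = jacMatrix hp hq fun i => φ (a i) := by
  ext i j
  have h := map_mem_jacIdeal φ (jacMatrix_spec hp hq a j)
  rw [map_sub, map_mul, map_wPoly, map_boxPoly, map_monomial, map_one] at h
  rw [Matrix.map_apply, jacMatrix.eq_def hp hq fun i => φ (a i), LinearMap.toMatrix_apply,
    jacBasis_apply, jacMul_mk, repr_mk_eq hp hq _ h]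

theorem det_jacMul [Algebra ℚ S] (hp : 1 ≤ p) (hq : 1 ≤ q) (a : idxSet p q → S) :
    LinearMap.det (jacMul a) = (jacMatrix hp hq a).det := by
  rw [jacMatrix, LinearMap.det_toMatrix]

theorem map_genDelta {K : Type} [Field K] [CharZero K] [Algebra ℚ S] (hp : 1 ≤ p) (hq : 1 ≤ q)
    (φ : coefRing K p q →+* S) :
    φ (genDelta K p q) = (jacMatrix hp hq fun i => φ (X i)).det := by
  have h : genDelta K p q = LinearMap.det (jacMul (S := coefRing K p q) (p := p) (q := q) X) := rfl
  rw [h, det_jacMul hp hq, RingHom.map_det, RingHom.mapMatrix_apply, jacMatrix_map]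

end JacobianAlgebra

section Nodes

theorem pderiv_one_pderiv_zero {S : Type} [CommRing S] (f : MvPolynomial (Fin 2) S) :
    pderiv 1 (pderiv 0 f) = pderiv 0 (pderiv 1 f) := by
  ext d
  simp only [coeff_pderiv]
  rw [add_right_comm]
  simp
  ring

variable {K : Type} [Field K]

theorem IsNodeAt.eval_eq_zero {G f u v : MvPolynomial (Fin 2) K} {P : K × K}
    (h : IsNodeAt K G P) (hf : G * f = u * pderiv 0 G + v * pderiv 1 G) :
    eval ![P.1, P.2] u = 0 ∧ eval ![P.1, P.2] v = 0 := by
  obtain ⟨⟨h0, hx, hy⟩, hh⟩ := h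
  have e0 := congrArg (fun g => eval ![P.1, P.2] (pderiv 0 g)) hf
  have e1 := congrArg (fun g => eval ![P.1, P.2] (pderiv 1 g)) hf
  simp only [pderiv_mul, map_add, map_mul, h0, hx, hy, mul_zero, zero_mul, zero_add,
    pderiv_one_pderiv_zero] at e0 e1
  simp only [hessPoly, map_sub, map_mul, map_pow] at hh
  constructor
  · refine (mul_eq_zero.1 ?_).resolve_right hh
    linear_combination eval ![P.1, P.2] (pderiv 0 (pderiv 1 G)) * e1 -
      eval ![P.1, P.2] (pderiv 1 (pderiv 1 G)) * e0
  · refine (mul_eq_zero.1 ?_).resolve_right hh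
    linear_combination eval ![P.1, P.2] (pderiv 0 (pderiv 1 G)) * e0 -
      eval ![P.1, P.2] (pderiv 0 (pderiv 0 G)) * e1

theorem exists_eq_C_eval_add (f : MvPolynomial (Fin 2) K) (P : K × K) :
    ∃ g h, f = C (eval ![P.1, P.2] f) + g * (X 0 - C P.1) + h * (X 1 - C P.2) := by
  induction f using MvPolynomial.induction_on with
  | C c => exact ⟨0, 0, by simp⟩
  | add f₁ f₂ h₁ h₂ =>
    obtain ⟨g₁, k₁, e₁⟩ := h₁
    obtain ⟨g₂, k₂, e₂⟩ := h₂
    refine ⟨g₁ + g₂, k₁ + k₂, ?_⟩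
    rw [map_add, C_add]
    linear_combination e₁ + e₂
  | mul_X f i hf =>
    obtain ⟨g, k, e⟩ := hf
    fin_cases i
    · refine ⟨g * X 0 + C (eval ![P.1, P.2] f), k * X 0, ?_⟩
      simp only [Fin.zero_eta, map_mul, eval_X, Matrix.cons_val_zero]
      linear_combination X 0 * e
    · refine ⟨g * X 1, k * X 1 + C (eval ![P.1, P.2] f), ?_⟩
      simp only [Fin.mk_one, map_mul, eval_X, Matrix.cons_val_one, Matrix.cons_val_fin_one]
      linear_combination X 1 * e

theorem IsNodeAt.exists_mul_mem {G : MvPolynomial (Fin 2) K} {P : K × K} (h : IsNodeAt K G P) :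
    ∃ s, eval ![P.1, P.2] s ≠ 0 ∧ ∀ f, eval ![P.1, P.2] f = 0 →
      s * f ∈ Ideal.span {pderiv 0 G, pderiv 1 G} := by
  obtain ⟨⟨-, hx, hy⟩, hh⟩ := h
  obtain ⟨a, b, e0⟩ := exists_eq_C_eval_add (pderiv 0 G) P
  obtain ⟨c, d, e1⟩ := exists_eq_C_eval_add (pderiv 1 G) P
  rw [hx, C_0, zero_add] at e0
  rw [hy, C_0, zero_add] at e1
  refine ⟨a * d - b * c, ?_, ?_⟩
  · have e00 := congrArg (fun g => eval ![P.1, P.2] (pderiv 0 g)) e0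
    have e01 := congrArg (fun g => eval ![P.1, P.2] (pderiv 1 g)) e0
    have e10 := congrArg (fun g => eval ![P.1, P.2] (pderiv 0 g)) e1
    have e11 := congrArg (fun g => eval ![P.1, P.2] (pderiv 1 g)) e1
    simp at e00 e01 e10 e11
    rw [pderiv_one_pderiv_zero] at e01
    rw [hessPoly] at hh
    simp only [map_sub, map_mul, map_pow] at hh ⊢
    rw [← e00, ← e01, ← e10, ← e11]
    intro h0
    exact hh (by linear_combination h0)
  · intro f hf
    obtain ⟨g, k, e⟩ := exists_eq_C_eval_add f P
    rw [hf, C_0, zero_add] at e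
    refine Ideal.mem_span_pair.2 ⟨g * d - k * c, k * a - g * b, ?_⟩
    linear_combination (g * d - k * c) * e0 + (k * a - g * b) * e1 - (a * d - b * c) * e

/-- If every singular point of `G = 0` is a node, an element of `R` vanishing at all of them which
is killed by `G` modulo an ideal containing the partial derivatives lies in that ideal. -/
theorem mem_of_mul_mem_of_eval_eq_zero [IsAlgClosed K] {G : MvPolynomial (Fin 2) K}
    (hG : ∀ Q, IsSingAt K G Q → IsNodeAt K G Q) {I : Ideal (MvPolynomial (Fin 2) K)}
    (hI : Ideal.span {pderiv 0 G, pderiv 1 G} ≤ I) {f : MvPolynomial (Fin 2) K}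
    (hGf : G * f ∈ I) (hf : ∀ Q, IsSingAt K G Q → eval ![Q.1, Q.2] f = 0) : f ∈ I := by
  by_contra hfI
  have hne : Submodule.colon I {f} ≠ ⊤ := by
    intro h
    have h1 : (1 : MvPolynomial (Fin 2) K) ∈ Submodule.colon I {f} := h ▸ Submodule.mem_top
    rw [Submodule.mem_colon_singleton, one_smul] at h1
    exact hfI h1
  obtain ⟨M, hM, hle⟩ := Ideal.exists_le_maximal _ hne
  obtain ⟨x, rfl⟩ := isMaximal_iff_eq_vanishingIdeal_singleton.1 hM
  have hx : x = ![x 0, x 1] := by ext i; fin_cases i <;> rfl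
  have key : ∀ g, g * f ∈ I → eval ![x 0, x 1] g = 0 := by
    intro g hg
    have := hle (Submodule.mem_colon_singleton.2 hg)
    rw [mem_vanishingIdeal_singleton_iff, aeval_eq_eval] at this
    rwa [← hx]
  have hd : ∀ g ∈ ({pderiv 0 G, pderiv 1 G} : Set _), eval ![x 0, x 1] g = 0 := fun g hg =>
    key g (I.mul_mem_right _ (hI (Ideal.subset_span hg)))
  have hs : IsSingAt K G (x 0, x 1) :=
    ⟨key G hGf, hd _ (Set.mem_insert _ _), hd _ (Set.mem_insert_of_mem _ rfl)⟩
  obtain ⟨s, hs0, hsf⟩ := (hG _ hs).exists_mul_mem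
  exact hs0 (key s (hI (hsf f (hf _ hs))))

theorem exists_eval_eq_ite {l : ℕ} {P : Fin l → K × K} (hP : Function.Injective P) (i : Fin l) :
    ∃ f : MvPolynomial (Fin 2) K,
      ∀ j, eval ![(P j).1, (P j).2] f = if j = i then 1 else 0 := by
  classical
  have hsep : ∀ j, j ≠ i → ∃ g : MvPolynomial (Fin 2) K,
      eval ![(P i).1, (P i).2] g = 1 ∧ eval ![(P j).1, (P j).2] g = 0 := by
    intro j hj
    by_cases h1 : (P i).1 = (P j).1
    · have h2 : (P i).2 - (P j).2 ≠ 0 := fun h =>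
        hj (hP (Prod.ext h1 (sub_eq_zero.1 h))).symm
      exact ⟨C ((P i).2 - (P j).2)⁻¹ * (X 1 - C (P j).2), by simp [h2], by simp⟩
    · have h2 : (P i).1 - (P j).1 ≠ 0 := sub_ne_zero.2 h1
      exact ⟨C ((P i).1 - (P j).1)⁻¹ * (X 0 - C (P j).1), by simp [h2], by simp⟩
  choose! g hg using hsep
  refine ⟨∏ j ∈ Finset.univ.erase i, g j, fun j => ?_⟩
  rw [map_prod]
  split_ifs with h
  · subst h
    exact Finset.prod_eq_one fun k hk => (hg k (Finset.ne_of_mem_erase hk)).1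
  · exact Finset.prod_eq_zero (Finset.mem_erase.2 ⟨h, Finset.mem_univ j⟩) (hg j h).2

end Nodes

section LinearAlgebra

variable {K : Type} [Field K]

theorem exists_basis_adapted {V : Type} [AddCommGroup V] [Module K V] [FiniteDimensional K V]
    {l : ℕ} (T : V →ₗ[K] V) (ev : V →ₗ[K] (Fin l → K)) (hev : Function.Surjective ev)
    (hT : ∀ x, ev (T x) = 0) (hinj : ∀ x, T x = 0 → ev x = 0 → x = 0) :
    ∃ (n : ℕ) (B : Module.Basis (Fin l ⊕ Fin n) K V),
      (∀ x j, B.repr x (Sum.inl j) = ev x j) ∧ (∀ i, T (B (Sum.inl i)) = 0) ∧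
      (LinearMap.toMatrix B B T).toBlocks₂₂.det ≠ 0 := by
  classical
  have hle : LinearMap.range T ≤ LinearMap.ker ev := by
    rintro _ ⟨x, rfl⟩
    exact hT x
  have h1 := LinearMap.finrank_range_add_finrank_ker T
  have h2 := LinearMap.finrank_range_add_finrank_ker ev
  rw [LinearMap.range_eq_top.2 hev, finrank_top, Module.finrank_fin_fun] at h2
  have h3 := Submodule.finrank_mono hle
  have hdisj : Disjoint (LinearMap.ker T) (LinearMap.ker ev) :=
    Submodule.disjoint_def.2 fun x hx hx' => hinj x hx hx'
  have hcompl : IsCompl (LinearMap.ker T) (LinearMap.ker ev) :=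
    (Submodule.isCompl_iff_disjoint _ _ (by omega)).2 hdisj
  have h4 := Submodule.finrank_add_eq_of_isCompl hcompl
  have hinj' : Function.Injective (ev ∘ₗ (LinearMap.ker T).subtype) := by
    rw [← LinearMap.ker_eq_bot, LinearMap.ker_eq_bot']
    intro x hx
    exact Subtype.ext (hinj x x.2 hx)
  have hsurj : Function.Surjective (ev ∘ₗ (LinearMap.ker T).subtype) := by
    rw [← LinearMap.injective_iff_surjective_of_finrank_eq_finrank]
    · exact hinj'
    · rw [Module.finrank_fin_fun]; omega
  let E := LinearEquiv.ofBijective _ ⟨hinj', hsurj⟩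
  let b₁ : Module.Basis (Fin l) K (LinearMap.ker T) := Module.Basis.ofEquivFun E
  let b₂ := Module.finBasis K (LinearMap.ker ev)
  let B := (b₁.prod b₂).map (Submodule.prodEquivOfIsCompl _ _ hcompl)
  have hBl : ∀ i, B (Sum.inl i) = b₁ i := fun i => by simp [B]
  have hBr : ∀ i, B (Sum.inr i) = b₂ i := fun i => by simp [B]
  have hevl : ∀ i, ev (b₁ i) = Pi.single i 1 := fun i => by
    have : E (b₁ i) = Pi.single i 1 := by simp [b₁]
    exact this
  have hrepr : ∀ x j, B.repr x (Sum.inl j) = ev x j := by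
    intro x j
    have : B.coord (Sum.inl j) = LinearMap.proj j ∘ₗ ev := by
      refine B.ext fun i => ?_
      rcases i with i | i
      · rw [LinearMap.comp_apply, hBl, hevl, ← hBl]
        simp [Finsupp.single_apply, Pi.single_apply, eq_comm]
      · rw [LinearMap.comp_apply, hBr, LinearMap.mem_ker.1 (b₂ i).2, ← hBr]
        simp
    exact DFunLike.congr_fun this x
  have hker : ∀ i, T (B (Sum.inl i)) = 0 := fun i => by
    rw [hBl]; exact (b₁ i).2
  refine ⟨_, B, hrepr, hker, fun hdet => ?_⟩
  obtain ⟨v, hv0, hv⟩ := Matrix.exists_mulVec_eq_zero_iff.2 hdet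
  let x : V := ∑ k, v k • B (Sum.inr k)
  have hx : ∀ k, B.repr x (Sum.inr k) = v k := fun k => by
    simp [x, Finsupp.single_apply]
  have hTx : T x = 0 := by
    rw [← B.repr.map_eq_zero_iff]
    ext i
    rcases i with i | i
    · rw [hrepr, hT]; rfl
    · have := congrFun hv i
      rw [Matrix.mulVec, dotProduct] at this
      simp only [x, map_sum, map_smul, Finsupp.coe_finsetSum, Finset.sum_apply,
        Finsupp.smul_apply, smul_eq_mul, Finsupp.coe_zero, Pi.zero_apply]
      rw [Pi.zero_apply] at this
      rw [← this]
      exact Finset.sum_congr rfl fun k _ => by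
        rw [Matrix.toBlocks₂₂, Matrix.of_apply, LinearMap.toMatrix_apply, mul_comm]
  have hevx : ev x = 0 := by
    simp only [x, map_sum, map_smul, hBr]
    exact Finset.sum_eq_zero fun k _ => by rw [LinearMap.mem_ker.1 (b₂ k).2, smul_zero]
  refine hv0 (funext fun k => ?_)
  rw [← hx, hinj x hTx hevx]
  simp

theorem coeff_det_of_coeff_zero_eq_zero {l n : ℕ}
    (M : Matrix (Fin l ⊕ Fin n) (Fin l ⊕ Fin n) (Polynomial K))
    (h₁ : ∀ i j, (M (Sum.inl i) j).coeff 0 = 0)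
    (h₂ : ∀ i j, (M i (Sum.inl j)).coeff 0 = 0) :
    (∀ m < l, M.det.coeff m = 0) ∧
      M.det.coeff l = (Matrix.of fun i j => (M (Sum.inl i) (Sum.inl j)).coeff 1).det *
        (Matrix.of fun i j => (M (Sum.inr i) (Sum.inr j)).coeff 0).det := by
  let N : Matrix (Fin l ⊕ Fin n) (Fin l ⊕ Fin n) (Polynomial K) :=
    Matrix.of (Sum.elim (fun i j => (M (Sum.inl i) j).divX) fun i => M (Sum.inr i))
  have hM : M = Matrix.of fun i j =>
      (Sum.elim (fun _ => Polynomial.X) (fun _ => 1) : _ → Polynomial K) i * N i j := by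
    ext1 i j
    rcases i with i | i
    · have := Polynomial.divX_mul_X_add (M (Sum.inl i) j)
      rw [h₁, Polynomial.C_0, add_zero, mul_comm] at this
      exact this.symm
    · simp [N]
  have hdet : M.det = Polynomial.X ^ l * N.det := by
    rw [hM, Matrix.det_mul_column, Fintype.prod_sum_type]
    simp
  refine ⟨fun m hm => ?_, ?_⟩
  · rw [hdet, Polynomial.coeff_X_pow_mul', if_neg (by omega)]
  · rw [hdet, Polynomial.coeff_X_pow_mul', if_pos le_rfl, Nat.sub_self,
      Polynomial.coeff_zero_eq_eval_zero, ← Polynomial.coe_evalRingHom, RingHom.map_det,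
      ← Matrix.det_fromBlocks_zero₂₁ _
        (Matrix.of fun i j => (M (Sum.inl i) (Sum.inr j)).coeff 1)]
    congr 1
    ext i j
    rw [RingHom.mapMatrix_apply, Matrix.map_apply, Polynomial.coe_evalRingHom,
      ← Polynomial.coeff_zero_eq_eval_zero]
    rcases i with i | i <;> rcases j with j | j <;> simp [N, Polynomial.coeff_divX, h₂]

theorem coeff_aeval_C_mul_X {σ : Type} (f : MvPolynomial σ K) (t : σ → K) (m : ℕ) :
    (aeval (fun i => Polynomial.C (t i) * Polynomial.X) f : Polynomial K).coeff m =
      eval t (homogeneousComponent m f) := by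
  induction f using MvPolynomial.induction_on' with
  | monomial d c =>
    rw [homogeneousComponent_of_mem (isHomogeneous_monomial c rfl), aeval_monomial]
    simp only [mul_pow, Finsupp.prod_mul, ← map_pow]
    have h1 : (d.prod fun i k => Polynomial.C (t i ^ k)) =
        Polynomial.C (d.prod fun i k => t i ^ k) := by
      simp [Finsupp.prod]
    have h2 : (d.prod fun _ k => (Polynomial.X : Polynomial K) ^ k) =
        Polynomial.X ^ d.degree := by
      rw [Finsupp.prod, Finset.prod_pow_eq_pow_sum]; rfl
    rw [h1, h2, Polynomial.algebraMap_apply, Algebra.algebraMap_self_apply, ← mul_assoc,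
      ← Polynomial.C_mul, Polynomial.coeff_C_mul_X_pow]
    split_ifs with h
    · rw [eval_monomial]
    · rw [map_zero]
  | add f g hf hg => rw [map_add, Polynomial.coeff_add, hf, hg, map_add, map_add]

end LinearAlgebra

section LowestTerm

variable {K : Type} [Field K] {p q l : ℕ}

/-- Evaluation of residue classes at common zeros of the partial derivatives. -/
noncomputable def jacEval (a : idxSet p q → K) (P : Fin l → K × K)
    (hP : ∀ i, IsSingAt K (wPoly K p q a) (P i)) :
    (MvPolynomial (Fin 2) K ⧸ jacIdeal a) →ₗ[K] (Fin l → K) :=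
  LinearMap.pi fun j =>
    (Ideal.Quotient.liftₐ (jacIdeal a) (aeval ![(P j).1, (P j).2]) fun f hf => by
      obtain ⟨u, v, rfl⟩ := mem_jacIdeal.1 hf
      obtain ⟨-, hx, hy⟩ := hP j
      rw [aeval_eq_eval, map_add, map_mul, map_mul, hx, hy, mul_zero, mul_zero,
        add_zero]).toLinearMap

theorem jacEval_mk (a : idxSet p q → K) (P : Fin l → K × K)
    (hP : ∀ i, IsSingAt K (wPoly K p q a) (P i)) (f : MvPolynomial (Fin 2) K) (j : Fin l) :
    jacEval a P hP (Ideal.Quotient.mk (jacIdeal a) f) j = eval ![(P j).1, (P j).2] f := by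
  rw [← aeval_eq_eval]
  rfl

theorem jacEval_surjective (a : idxSet p q → K) {P : Fin l → K × K} (hinj : Function.Injective P)
    (hP : ∀ i, IsSingAt K (wPoly K p q a) (P i)) : Function.Surjective (jacEval a P hP) := by
  intro c
  choose f hf using exists_eval_eq_ite hinj
  refine ⟨Ideal.Quotient.mk (jacIdeal a) (∑ i, C (c i) * f i), funext fun j => ?_⟩
  rw [jacEval_mk]
  simp [hf]

theorem jacEval_jacMul (a : idxSet p q → K) (P : Fin l → K × K)
    (hP : ∀ i, IsSingAt K (wPoly K p q a) (P i)) (x : MvPolynomial (Fin 2) K ⧸ jacIdeal a) :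
    jacEval a P hP (jacMul a x) = 0 := by
  obtain ⟨f, rfl⟩ := Ideal.Quotient.mk_surjective x
  funext j
  rw [jacMul_mk, jacEval_mk, map_mul, (hP j).1, zero_mul, Pi.zero_apply]

theorem jacEval_injective_on_ker [IsAlgClosed K] (a : idxSet p q → K) (P : Fin l → K × K)
    (hP : ∀ i, IsNodeAt K (wPoly K p q a) (P i))
    (hall : ∀ Q, IsSingAt K (wPoly K p q a) Q → ∃ i, Q = P i)
    (x : MvPolynomial (Fin 2) K ⧸ jacIdeal a) (hx : jacMul a x = 0)
    (hx' : jacEval a P (fun i => (hP i).1) x = 0) : x = 0 := by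
  obtain ⟨f, rfl⟩ := Ideal.Quotient.mk_surjective x
  rw [jacMul_mk, Ideal.Quotient.eq_zero_iff_mem] at hx
  rw [Ideal.Quotient.eq_zero_iff_mem]
  refine mem_of_mul_mem_of_eval_eq_zero (G := wPoly K p q a) ?_ le_rfl hx ?_
  · intro Q hQ
    obtain ⟨i, rfl⟩ := hall Q hQ
    exact hP i
  · intro Q hQ
    obtain ⟨i, rfl⟩ := hall Q hQ
    rw [← jacEval_mk a P (fun i => (hP i).1), hx', Pi.zero_apply]

theorem coeff_zero_eval_C (f : MvPolynomial (Fin 2) (Polynomial K)) (P : K × K) :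
    (eval ![Polynomial.C P.1, Polynomial.C P.2] f).coeff 0 =
      eval ![P.1, P.2] (map (Polynomial.evalRingHom 0) f) := by
  rw [Polynomial.coeff_zero_eq_eval_zero, ← Polynomial.coe_evalRingHom, map_eval]
  congr 2
  ext i
  fin_cases i <;> simp

/-- The line through `a` in direction `t`. -/
noncomputable def lineParam (a t : idxSet p q → K) (i : idxSet p q) : Polynomial K :=
  Polynomial.C (a i) + Polynomial.C (t i) * Polynomial.X

theorem evalRingHom_lineParam (a t : idxSet p q → K) :
    (fun i => Polynomial.evalRingHom 0 (lineParam a t i)) = a := by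
  funext i
  simp [lineParam]

theorem eval_wPoly_lineParam (a t : idxSet p q → K) (P : K × K) :
    eval ![Polynomial.C P.1, Polynomial.C P.2] (wPoly (Polynomial K) p q (lineParam a t)) =
      Polynomial.C (eval ![P.1, P.2] (wPoly K p q a)) +
        Polynomial.C (eval t (nodeLinForm K p q P.1 P.2)) * Polynomial.X := by
  simp only [wPoly, lineParam, nodeLinForm, map_add, map_sub, map_sum, map_mul, map_pow, eval_X,
    eval_C, Matrix.cons_val_zero, Matrix.cons_val_one, Matrix.cons_val_fin_one, Finset.sum_mul,
    add_mul, Finset.sum_add_distrib, ← add_assoc]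
  congr 1
  exact Finset.sum_congr rfl fun i _ => by ring

theorem boxPoly_mulVec_mem {S : Type} [CommRing S] [Algebra ℚ S] (hp : 1 ≤ p) (hq : 1 ≤ q)
    (A : idxSet p q → S) (c : BoxIdx p q → S) :
    wPoly S p q A * boxPoly c - boxPoly ((jacMatrix hp hq A).mulVec c) ∈ jacIdeal A := by
  have h₁ : wPoly S p q A * boxPoly c =
      ∑ j, C (c j) * (wPoly S p q A * monomial (boxExp j) 1) := by
    rw [boxPoly, Finset.mul_sum]
    exact Finset.sum_congr rfl fun j _ => mul_left_comm _ _ _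
  have h₂ : boxPoly ((jacMatrix hp hq A).mulVec c) =
      ∑ j, C (c j) * boxPoly (fun i => jacMatrix hp hq A i j) := by
    simp only [boxPoly, Finset.mul_sum, Matrix.mulVec, dotProduct, map_sum, map_mul,
      Finset.sum_mul]
    rw [Finset.sum_comm]
    refine Finset.sum_congr rfl fun j _ => Finset.sum_congr rfl fun i _ => ?_
    rw [mul_comm (C (jacMatrix hp hq A i j)), mul_assoc]
  rw [h₁, h₂, ← Finset.sum_sub_distrib]
  refine Ideal.sum_mem _ fun j _ => ?_
  rw [← mul_sub]
  exact Ideal.mul_mem_left _ _ (jacMatrix_spec hp hq A j)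

theorem exists_coeff_det_lineParam [IsAlgClosed K] [CharZero K] (hp : 1 ≤ p) (hq : 1 ≤ q)
    (a : idxSet p q → K) {P : Fin l → K × K} (hinj : Function.Injective P)
    (hP : ∀ i, IsNodeAt K (wPoly K p q a) (P i))
    (hall : ∀ Q, IsSingAt K (wPoly K p q a) Q → ∃ i, Q = P i) :
    ∃ e : K, e ≠ 0 ∧ ∀ t : idxSet p q → K,
      (∀ m < l, (jacMatrix hp hq (lineParam a t)).det.coeff m = 0) ∧
      (jacMatrix hp hq (lineParam a t)).det.coeff l =
        e * ∏ i, eval t (nodeLinForm K p q (P i).1 (P i).2) := by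
  classical
  let b := jacBasis hp hq a
  have hfin : FiniteDimensional K (MvPolynomial (Fin 2) K ⧸ jacIdeal a) :=
    Module.Finite.of_basis b
  obtain ⟨n, B, hB, hker, hdet⟩ := exists_basis_adapted (jacMul a)
    (jacEval a P fun i => (hP i).1) (jacEval_surjective a hinj _) (jacEval_jacMul a P _)
    (jacEval_injective_on_ker a P hP hall)
  refine ⟨_, hdet, fun t => ?_⟩
  let M := jacMatrix hp hq (lineParam a t)
  let U := (B.toMatrix b).map (Polynomial.C : K →+* Polynomial K)
  let V := (b.toMatrix B).map (Polynomial.C : K →+* Polynomial K)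
  have hUV : U * V = 1 := by
    rw [← Matrix.map_mul, Module.Basis.toMatrix_mul_toMatrix_flip]
    simp
  have hVU : V * U = 1 := by
    rw [← Matrix.map_mul, Module.Basis.toMatrix_mul_toMatrix_flip]
    simp
  have hM : M.det = (U * M * V).det := (Matrix.det_conj_of_mul_eq_one hUV hVU).symm
  have hCe : ⇑(Polynomial.evalRingHom (0 : K)) ∘ ⇑(Polynomial.C : K →+* Polynomial K) = id := by
    funext x; simp
  have hM0 : M.map (Polynomial.evalRingHom 0) = LinearMap.toMatrix b b (jacMul a) := by
    rw [jacMatrix_map, evalRingHom_lineParam]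
    rfl
  have hU0 : U.map (Polynomial.evalRingHom 0) = B.toMatrix b := by
    rw [Matrix.map_map, hCe, Matrix.map_id]
  have hV0 : V.map (Polynomial.evalRingHom 0) = b.toMatrix B := by
    rw [Matrix.map_map, hCe, Matrix.map_id]
  have h0 : ∀ i j, ((U * M * V) i j).coeff 0 = LinearMap.toMatrix B B (jacMul a) i j := by
    intro i j
    rw [← basis_toMatrix_mul_linearMap_toMatrix_mul_basis_toMatrix B b B b (jacMul a), ← hM0,
      ← hU0, ← hV0, ← Matrix.map_mul, ← Matrix.map_mul, Matrix.map_apply,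
      Polynomial.coeff_zero_eq_eval_zero, Polynomial.coe_evalRingHom]
  have h1 : ∀ j i, ((U * M * V) (Sum.inl j) (Sum.inl i)).coeff 1 =
      if i = j then eval t (nodeLinForm K p q (P j).1 (P j).2) else 0 := by
    intro j i
    set c : BoxIdx p q → Polynomial K := fun r => V r (Sum.inl i) with hc
    have hMV0 : ∀ r, Polynomial.evalRingHom 0 (M.mulVec c r) = 0 := by
      intro r
      have : M.mulVec c r = (M * V) r (Sum.inl i) := rfl
      rw [this, ← Matrix.map_apply (f := Polynomial.evalRingHom (0 : K)), Matrix.map_mul, hM0, hV0,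
        linearMap_toMatrix_mul_basis_toMatrix, LinearMap.toMatrix_apply, hker]
      simp
    have hentry : (U * M * V) (Sum.inl j) (Sum.inl i) =
        eval ![Polynomial.C (P j).1, Polynomial.C (P j).2] (boxPoly (M.mulVec c)) := by
      rw [Matrix.mul_assoc, Matrix.mul_apply, boxPoly, map_sum]
      refine Finset.sum_congr rfl fun r _ => ?_
      have hr : U (Sum.inl j) r =
          Polynomial.C (eval ![(P j).1, (P j).2] (monomial (boxExp r) 1)) := by
        rw [← jacEval_mk a P (fun i => (hP i).1), ← jacBasis_apply hp hq a, ← hB]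
        rfl
      have hr' : Polynomial.C (eval ![(P j).1, (P j).2] (monomial (boxExp r) 1)) =
          eval ![Polynomial.C (P j).1, Polynomial.C (P j).2] (monomial (boxExp r) 1) := by
        simp [eval_monomial, Finsupp.prod_fintype]
      rw [hr, hr', map_mul, eval_C, mul_comm]
      rfl
    obtain ⟨u, v, huv⟩ := mem_jacIdeal.1 (boxPoly_mulVec_mem hp hq (lineParam a t) c)
    have hw0 : map (Polynomial.evalRingHom 0) (wPoly (Polynomial K) p q (lineParam a t)) =
        wPoly K p q a := by
      rw [map_wPoly, evalRingHom_lineParam]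
    have hbc : map (Polynomial.evalRingHom 0) (boxPoly c) = boxPoly (b.repr (B (Sum.inl i))) := by
      rw [map_boxPoly]
      congr 1
      funext r
      simp only [hc, V, Matrix.map_apply, Polynomial.coe_evalRingHom, Polynomial.eval_C]
      rfl
    have huv0 := congrArg (map (Polynomial.evalRingHom 0)) huv
    have hz : map (Polynomial.evalRingHom 0) (boxPoly (M.mulVec c)) = 0 := by
      rw [map_boxPoly]
      simp only [hMV0]
      simp [boxPoly]
    rw [map_add, map_sub, map_mul, map_mul, map_mul, ← pderiv_map, ← pderiv_map, hw0, hz,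
      sub_zero] at huv0
    obtain ⟨hu, hv⟩ := (hP j).eval_eq_zero huv0.symm
    have hE : (eval ![Polynomial.C (P j).1, Polynomial.C (P j).2] (boxPoly c)).coeff 0 =
        if i = j then 1 else 0 := by
      rw [coeff_zero_eval_C, hbc, ← jacEval_mk a P (fun i => (hP i).1), mk_boxPoly_repr, ← hB]
      simp [Finsupp.single_apply]
    have hev := congrArg (fun f => (eval ![Polynomial.C (P j).1, Polynomial.C (P j).2] f).coeff 1)
      huv
    simp only [map_add, map_sub, map_mul, Polynomial.coeff_add, Polynomial.coeff_sub,
      Polynomial.mul_coeff_one, eval_wPoly_lineParam, (hP j).1.1] at hev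
    rw [coeff_zero_eval_C u, coeff_zero_eval_C v, coeff_zero_eval_C (pderiv 0 _),
      coeff_zero_eval_C (pderiv 1 _), hE, hu, hv, ← pderiv_map, ← pderiv_map, hw0,
      (hP j).1.2.1, (hP j).1.2.2] at hev
    rw [hentry]
    simp at hev
    rw [sub_eq_zero.1 hev.symm]
  have := coeff_det_of_coeff_zero_eq_zero (U * M * V)
    (fun i j => by rw [h0, LinearMap.toMatrix_apply, hB, jacEval_jacMul, Pi.zero_apply])
    (fun i j => by rw [h0, LinearMap.toMatrix_apply, hker]; simp)
  rw [← hM] at this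
  refine ⟨this.1, ?_⟩
  rw [this.2, mul_comm]
  congr 1
  · congr 1
    ext i j
    rw [Matrix.of_apply, h0]
    rfl
  · rw [← Matrix.det_diagonal]
    congr 1
    ext i j
    rw [Matrix.of_apply, h1, Matrix.diagonal_apply]
    simp only [eq_comm]

theorem homogeneousComponent_shift_genDelta [IsAlgClosed K] [CharZero K] (hp : 1 ≤ p) (hq : 1 ≤ q)
    (a : idxSet p q → K) {P : Fin l → K × K} (hinj : Function.Injective P)
    (hP : ∀ i, IsNodeAt K (wPoly K p q a) (P i))
    (hall : ∀ Q, IsSingAt K (wPoly K p q a) Q → ∃ i, Q = P i) :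
    (∀ m : ℕ, m < l → homogeneousComponent m
      (aeval (fun i : idxSet p q => X i + C (a i)) (genDelta K p q)) = 0) ∧
    ∃ e : K, e ≠ 0 ∧ homogeneousComponent l
        (aeval (fun i : idxSet p q => X i + C (a i)) (genDelta K p q)) =
      C e * ∏ i : Fin l, nodeLinForm K p q (P i).1 (P i).2 := by
  obtain ⟨e, he, h⟩ := exists_coeff_det_lineParam hp hq a hinj hP hall
  have key : ∀ (t : idxSet p q → K) (m : ℕ), eval t (homogeneousComponent m
      (aeval (fun i : idxSet p q => X i + C (a i)) (genDelta K p q))) =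
      (jacMatrix hp hq (lineParam a t)).det.coeff m := by
    intro t m
    rw [← coeff_aeval_C_mul_X]
    let φ : coefRing K p q →+* Polynomial K :=
      ((aeval fun i => Polynomial.C (t i) * Polynomial.X : coefRing K p q →ₐ[K] _).comp
        (aeval fun i : idxSet p q => X i + C (a i))).toRingHom
    have hφ : (fun i => φ (X i)) = lineParam a t := by
      funext i
      simp [φ, lineParam, add_comm]
    rw [← hφ, ← map_genDelta hp hq φ]
    rfl
  refine ⟨fun m hm => MvPolynomial.funext fun t => ?_, e, he, MvPolynomial.funext fun t => ?_⟩
  · rw [key, (h t).1 m hm, map_zero]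
  · rw [key, (h t).2, map_mul, eval_C, map_prod]

end LowestTerm

section WeightFiltration

variable {K : Type} [Field K] {p q : ℕ}

/-- The homomorphism recording weights as powers of an auxiliary variable. -/
noncomputable def weightHom (K : Type) [Field K] (p q : ℕ) :
    MvPolynomial (Fin 2) K →ₐ[K] Polynomial (MvPolynomial (Fin 2) K) :=
  aeval ![Polynomial.C (X 0) * Polynomial.X ^ p, Polynomial.C (X 1) * Polynomial.X ^ q]

theorem weightHom_monomial (d : Fin 2 →₀ ℕ) (c : K) :
    weightHom K p q (monomial d c) =
      Polynomial.C (monomial d c) * Polynomial.X ^ expWeight p q d := by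
  have h : (monomial d c : MvPolynomial (Fin 2) K) = C c * (X 0 ^ d 0 * X 1 ^ d 1) := by
    rw [monomial_eq, Finsupp.prod_fintype _ _ (fun _ => pow_zero _), Fin.prod_univ_two]
  rw [h]
  simp only [weightHom, map_mul, map_pow, aeval_X, aeval_C, Matrix.cons_val_zero,
    Matrix.cons_val_one, Matrix.cons_val_fin_one, expWeight]
  rw [Polynomial.algebraMap_apply, algebraMap_eq]
  ring

theorem coeff_coeff_weightHom (f : MvPolynomial (Fin 2) K) (w : ℕ) (d : Fin 2 →₀ ℕ) :
    coeff d ((weightHom K p q f).coeff w) = if expWeight p q d = w then coeff d f else 0 := by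
  classical
  induction f using MvPolynomial.induction_on' with
  | monomial e c =>
    rw [weightHom_monomial, Polynomial.coeff_C_mul_X_pow]
    by_cases h : e = d
    · subst h
      by_cases hw : expWeight p q e = w
      · simp [hw]
      · simp [hw, Ne.symm hw]
    · rw [coeff_monomial, if_neg h, ite_self]
      split_ifs
      · rw [coeff_monomial, if_neg h]
      · rw [coeff_zero]
  | add f g hf hg =>
    rw [map_add, Polynomial.coeff_add, coeff_add, hf, hg, coeff_add]
    split_ifs <;> simp

theorem natDegree_weightHom_le_iff {f : MvPolynomial (Fin 2) K} {w : ℕ} :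
    (weightHom K p q f).natDegree ≤ w ↔ f ∈ restrictSupport K {d | expWeight p q d ≤ w} := by
  constructor
  · intro h
    refine mem_restrictSupport_of_coeff fun d hd => ?_
    rw [Set.mem_ofPred_eq]
    by_contra hlt
    have := coeff_coeff_weightHom (p := p) (q := q) f (expWeight p q d) d
    rw [Polynomial.coeff_eq_zero_of_natDegree_lt (by omega), coeff_zero, if_pos rfl] at this
    exact hd this.symm
  · intro h
    rw [Polynomial.natDegree_le_iff_coeff_eq_zero]
    intro n hn
    ext d
    rw [coeff_coeff_weightHom, coeff_zero]
    split_ifs with hd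
    · refine coeff_eq_zero_of_mem_restrictSupport h ?_
      rw [Set.mem_ofPred_eq]
      omega
    · rfl

/-- The sum of the coefficients of weight `w`. -/
noncomputable def weightCoeff (p q w : ℕ) (f : MvPolynomial (Fin 2) K) : K :=
  eval 1 ((weightHom K p q f).coeff w)

theorem weightCoeff_sub (w : ℕ) (f g : MvPolynomial (Fin 2) K) :
    weightCoeff p q w (f - g) = weightCoeff p q w f - weightCoeff p q w g := by
  simp [weightCoeff]

theorem weightCoeff_add (w : ℕ) (f g : MvPolynomial (Fin 2) K) :
    weightCoeff p q w (f + g) = weightCoeff p q w f + weightCoeff p q w g := by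
  simp [weightCoeff]

theorem weightCoeff_monomial (w : ℕ) (d : Fin 2 →₀ ℕ) (c : K) :
    weightCoeff p q w (monomial d c) = if expWeight p q d = w then c else 0 := by
  rw [weightCoeff, weightHom_monomial, Polynomial.coeff_C_mul_X_pow]
  by_cases h : expWeight p q d = w
  · simp [h, eval_monomial]
  · simp [h, Ne.symm h]

theorem weightCoeff_eq_zero_of_lt {f : MvPolynomial (Fin 2) K} {w w' : ℕ}
    (hf : f ∈ restrictSupport K {d | expWeight p q d ≤ w}) (hw : w < w') :
    weightCoeff p q w' f = 0 := by
  rw [weightCoeff, Polynomial.coeff_eq_zero_of_natDegree_lt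
    ((natDegree_weightHom_le_iff.2 hf).trans_lt hw), map_zero]

theorem mul_mem_restrictSupport_le {f g : MvPolynomial (Fin 2) K} {w w' : ℕ}
    (hf : f ∈ restrictSupport K {d | expWeight p q d ≤ w})
    (hg : g ∈ restrictSupport K {d | expWeight p q d ≤ w'}) :
    f * g ∈ restrictSupport K {d | expWeight p q d ≤ w + w'} :=
  mul_mem_restrictSupport hf hg fun d hd e he => by
    rw [Set.mem_ofPred_eq] at *
    rw [expWeight_add]
    omega

theorem weightCoeff_mul {f g : MvPolynomial (Fin 2) K} {w w' : ℕ}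
    (hf : f ∈ restrictSupport K {d | expWeight p q d ≤ w})
    (hg : g ∈ restrictSupport K {d | expWeight p q d ≤ w'}) :
    weightCoeff p q (w + w') (f * g) = weightCoeff p q w f * weightCoeff p q w' g := by
  rw [weightCoeff, map_mul, Polynomial.coeff_mul_add_eq_of_natDegree_le
    (natDegree_weightHom_le_iff.2 hf) (natDegree_weightHom_le_iff.2 hg), map_mul]
  rfl

theorem eq_of_expWeight_eq (hp : 1 ≤ p) (hco : Nat.Coprime p q) {d e : Fin 2 →₀ ℕ}
    (hd : d 1 < p) (he : e 1 < p) (h : expWeight p q d = expWeight p q e) : d = e := by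
  have hmod : d 1 * q ≡ e 1 * q [MOD p] := by
    have := congrArg (· % p) h
    simpa [expWeight, Nat.ModEq, Nat.add_mod, Nat.mul_mod_left] using this
  have h1 : d 1 = e 1 :=
    Nat.ModEq.eq_of_lt_of_lt (Nat.ModEq.cancel_right_of_coprime hco hmod) hd he
  have h0 : d 0 = e 0 := by
    rw [expWeight, expWeight, h1, Nat.add_right_cancel_iff] at h
    exact Nat.eq_of_mul_eq_mul_right hp h
  ext i
  fin_cases i
  · exact h0
  · exact h1

theorem exists_weightCoeff_ne_zero (hp : 1 ≤ p) (hco : Nat.Coprime p q)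
    {f : MvPolynomial (Fin 2) K} (hf : f ∈ restrictSupport K {d | d 1 < p}) (h0 : f ≠ 0) :
    ∃ d ∈ f.support, f ∈ restrictSupport K {e | expWeight p q e ≤ expWeight p q d} ∧
      weightCoeff p q (expWeight p q d) f ≠ 0 := by
  classical
  obtain ⟨d, hd, hmax⟩ := Finset.exists_max_image f.support (expWeight p q) (support_nonempty.2 h0)
  refine ⟨d, hd, mem_restrictSupport_of_coeff fun e he => hmax e (mem_support_iff.2 he), ?_⟩
  have hsupp := (mem_restrictSupport_iff K).1 hf
  have htop : (weightHom K p q f).coeff (expWeight p q d) = monomial d (coeff d f) := by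
    ext e
    rw [coeff_coeff_weightHom, coeff_monomial]
    by_cases hde : d = e
    · rw [if_pos hde, if_pos (hde ▸ rfl), hde]
    · rw [if_neg hde]
      split_ifs with hw
      · by_contra hne
        exact hde (eq_of_expWeight_eq hp hco (hsupp hd) (hsupp (mem_support_iff.2 hne)) hw.symm)
      · rfl
  rw [weightCoeff, htop]
  simpa [eval_monomial] using hd

theorem wPoly_mem_restrictSupport (a : idxSet p q → K) :
    wPoly K p q a ∈ restrictSupport K {d | expWeight p q d ≤ p * q} := by
  rw [wPoly_eq, X_pow_eq_monomial_one, X_pow_eq_monomial_one]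
  refine Submodule.add_mem _ (Submodule.sub_mem _ ?_ ?_)
    (mem_restrictSupport_mono (wLow_mem a) fun d hd => by
      rw [Set.mem_ofPred_eq] at *; omega)
  · rw [monomial_mem_restrictSupport]
    left
    simp [expWeight]
  · rw [monomial_mem_restrictSupport]
    left
    simp [expWeight, mul_comm]

theorem coeff_weightHom_wPoly (a : idxSet p q → K) :
    (weightHom K p q (wPoly K p q a)).coeff (p * q) = X 1 ^ p - X 0 ^ q := by
  rw [wPoly_eq, map_add, map_sub, X_pow_eq_monomial_one, X_pow_eq_monomial_one,
    weightHom_monomial, weightHom_monomial, Polynomial.coeff_add, Polynomial.coeff_sub,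
    Polynomial.coeff_C_mul_X_pow, Polynomial.coeff_C_mul_X_pow, if_pos (by simp [expWeight]),
    if_pos (by simp [expWeight, mul_comm]), add_eq_left]
  ext d
  rw [coeff_coeff_weightHom, coeff_zero]
  split_ifs with hd
  · refine coeff_eq_zero_of_mem_restrictSupport (wLow_mem a) ?_
    rw [Set.mem_ofPred_eq]
    omega
  · rfl

theorem X_pow_sub_X_pow_ne_zero (hp : 1 ≤ p) :
    (X 1 ^ p - X 0 ^ q : MvPolynomial (Fin 2) K) ≠ 0 := by
  intro h
  have := congrArg (eval ![1, 0]) h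
  simp [Nat.ne_of_gt hp] at this

theorem wPoly_ne_zero (hp : 1 ≤ p) (a : idxSet p q → K) : wPoly K p q a ≠ 0 := by
  intro h
  have := coeff_weightHom_wPoly a
  rw [h, map_zero, Polynomial.coeff_zero] at this
  exact X_pow_sub_X_pow_ne_zero hp this.symm

/-- The top weight part of a multiple of a Weierstraß polynomial vanishes at `(1, 1)`. -/
theorem weightCoeff_eq_zero_of_dvd (hp : 1 ≤ p) (a : idxSet p q → K)
    {f : MvPolynomial (Fin 2) K} (hdvd : wPoly K p q a ∣ f) {w : ℕ}
    (hf : f ∈ restrictSupport K {d | expWeight p q d ≤ w}) : weightCoeff p q w f = 0 := by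
  obtain ⟨g, rfl⟩ := hdvd
  have hFw : weightHom K p q (wPoly K p q a) ≠ 0 := by
    intro h
    have := coeff_weightHom_wPoly a
    rw [h, Polynomial.coeff_zero] at this
    exact X_pow_sub_X_pow_ne_zero hp this.symm
  have hdeg : (weightHom K p q (wPoly K p q a)).natDegree = p * q :=
    le_antisymm (natDegree_weightHom_le_iff.2 (wPoly_mem_restrictSupport a))
      (Polynomial.le_natDegree_of_ne_zero
        (by rw [coeff_weightHom_wPoly]; exact X_pow_sub_X_pow_ne_zero hp))
  by_cases hg : weightHom K p q g = 0
  · rw [weightCoeff, map_mul, hg, mul_zero, Polynomial.coeff_zero, map_zero]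
  · have h := natDegree_weightHom_le_iff.2 hf
    rw [map_mul, Polynomial.natDegree_mul hFw hg, hdeg] at h
    obtain ⟨k, rfl⟩ := Nat.exists_eq_add_of_le (le_of_add_le_left h)
    rw [weightCoeff, map_mul, Polynomial.coeff_mul_add_eq_of_natDegree_le hdeg.le (by omega),
      coeff_weightHom_wPoly]
    simp

theorem pderiv_one_wPoly_mem_restrictSupport (hp : 1 ≤ p) (a : idxSet p q → K) :
    pderiv 1 (wPoly K p q a) ∈ restrictSupport K {d | expWeight p q d ≤ (p - 1) * q} := by
  rw [pderiv_one_wPoly, X_pow_eq_monomial_one]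
  refine Submodule.add_mem _ ?_
    (mem_restrictSupport_mono (pderiv_one_wLow_mem a hp) fun d hd => by
      rw [Set.mem_ofPred_eq] at *; omega)
  rw [← smul_eq_C_mul]
  refine Submodule.smul_mem _ _ ?_
  rw [monomial_mem_restrictSupport]
  left
  simp [expWeight]

theorem weightCoeff_pderiv_one_wPoly [CharZero K] (hp : 1 ≤ p) (a : idxSet p q → K) :
    weightCoeff p q ((p - 1) * q) (pderiv 1 (wPoly K p q a)) ≠ 0 := by
  have hlow : weightCoeff p q ((p - 1) * q) (pderiv 1 (wLow a)) = 0 := by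
    rw [weightCoeff, ← map_zero (eval 1)]
    congr 1
    ext d
    rw [coeff_coeff_weightHom, coeff_zero]
    split_ifs with hd
    · refine coeff_eq_zero_of_mem_restrictSupport (pderiv_one_wLow_mem a hp) ?_
      rw [Set.mem_ofPred_eq]
      omega
    · rfl
  rw [pderiv_one_wPoly, weightCoeff_add, hlow, add_zero, X_pow_eq_monomial_one, C_mul_monomial,
    weightCoeff_monomial, if_pos (by simp [expWeight]), mul_one]
  exact Nat.cast_ne_zero.2 (by omega)

theorem exists_sub_mem_dvd (a : idxSet p q → K) (hp : 1 ≤ p)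
    (f : MvPolynomial (Fin 2) K) :
    ∃ g ∈ restrictSupport K {d | d 1 < p}, wPoly K p q a ∣ f - g := by
  have hle : restrictSupport K Set.univ ≤
      LinearMap.range (LinearMap.mulLeft K (wPoly K p q a)) ⊔
        restrictSupport K {d : Fin 2 →₀ ℕ | d 1 < p} := by
    refine restrictSupport_le_of_reduction _ (fun d => d 1) _ fun d _ => ?_
    by_cases h1 : p ≤ d 1
    · have hlow : X 0 ^ q - wLow a ∈ restrictSupport K {e : Fin 2 →₀ ℕ | e 1 < p} := by
        refine Submodule.sub_mem _ ?_ (mem_restrictSupport_mono (wLow_mem a) fun e he => ?_)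
        · rw [X_pow_eq_monomial_one, monomial_mem_restrictSupport]
          left
          simpa [Nat.pos_iff_ne_zero] using Nat.ne_of_gt hp
        · rw [Set.mem_ofPred_eq, expWeight] at he
          exact Nat.lt_of_mul_lt_mul_right (a := q) (by omega)
      refine ⟨monomial (d - Finsupp.single 1 p) 1 * (X 0 ^ q - wLow a), ?_,
        Submodule.mem_sup_left ⟨monomial (d - Finsupp.single 1 p) 1, ?_⟩⟩
      · refine mul_mem_restrictSupport (s := {d - Finsupp.single 1 p}) ?_ hlow fun x hx e he => ?_
        · rw [monomial_mem_restrictSupport]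
          exact Or.inl rfl
        · rw [Set.mem_singleton_iff] at hx
          subst hx
          refine ⟨trivial, ?_⟩
          rw [Set.mem_ofPred_eq] at he
          simp only [Finsupp.add_apply, Finsupp.tsub_apply, Finsupp.single_eq_same]
          omega
      · rw [monomial_sub_single 1 h1, LinearMap.mulLeft_apply, wPoly_eq]
        ring
    · refine ⟨0, Submodule.zero_mem _, Submodule.mem_sup_right ?_⟩
      rw [sub_zero, monomial_mem_restrictSupport]
      exact Or.inl (not_le.1 h1)
  obtain ⟨_, ⟨u, rfl⟩, g, hg, h⟩ := Submodule.mem_sup.1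
    (hle (show f ∈ restrictSupport K Set.univ by simp))
  exact ⟨g, hg, u, by rw [← h, LinearMap.mulLeft_apply, add_sub_cancel_right]⟩

end WeightFiltration

section LinearIndependence

variable {K : Type} [Field K] {p q : ℕ}

/-- On a nodal Weierstraß curve, an element of the Jacobian algebra which is annihilated by the
Weierstraß polynomial and has too small weight vanishes. -/
theorem eq_zero_of_wPoly_mul_mem_jacIdeal [IsAlgClosed K] [CharZero K] (hp : 1 < p) (hpq : p < q)
    (hco : Nat.Coprime p q) (a : idxSet p q → K)
    (hnode : ∀ Q, IsSingAt K (wPoly K p q a) Q → IsNodeAt K (wPoly K p q a) Q)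
    {h : MvPolynomial (Fin 2) K}
    (hh : h ∈ restrictSupport K {d | expWeight p q d + p * q ≤ (q - 2) * p + (p - 2) * q})
    (hmem : wPoly K p q a * h ∈ jacIdeal a) : h = 0 := by
  by_contra hne
  set F := wPoly K p q a with hF
  set FX := pderiv 0 F with hFX
  set FY := pderiv 1 F with hFY
  have hp1 : 1 ≤ p := hp.le
  have hq1 : 1 ≤ q := by omega
  have e1 : (p - 1) * q + q = p * q := by
    obtain ⟨k, rfl⟩ := Nat.exists_eq_add_of_le' hp1
    simp [add_mul]
  have e2 : (p - 2) * q + 2 * q = p * q := by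
    obtain ⟨k, rfl⟩ := Nat.exists_eq_add_of_le' (show 2 ≤ p from hp)
    simp [add_mul]
  have e3 : (q - 1) * p + p = p * q := by
    obtain ⟨k, rfl⟩ := Nat.exists_eq_add_of_le' hq1
    simp; ring
  have e4 : (q - 2) * p + 2 * p = p * q := by
    obtain ⟨k, rfl⟩ := Nat.exists_eq_add_of_le' (show 2 ≤ q by omega)
    simp; ring
  have hlt : ∀ {w : ℕ} {f : MvPolynomial (Fin 2) K},
      f ∈ restrictSupport K {d | expWeight p q d + w ≤ (q - 2) * p + (p - 2) * q} →
      (q - 2) * p + (p - 2) * q < w + p * q → f ∈ restrictSupport K {d | d 1 < p} := by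
    intro w f hf hw
    refine mem_restrictSupport_mono hf fun d hd => ?_
    rw [Set.mem_ofPred_eq, expWeight] at hd
    exact Nat.lt_of_mul_lt_mul_right (a := q) (by omega)
  have hFh : F * h ∈ restrictSupport K {d | expWeight p q d ≤ (q - 2) * p + (p - 2) * q} :=
    mul_mem_restrictSupport (wPoly_mem_restrictSupport a) hh fun d hd e he => by
      rw [Set.mem_ofPred_eq] at *
      rw [expWeight_add]
      omega
  obtain ⟨r, hr, u, hu, v, hv, hrep⟩ := exists_rep_pderiv hp1 hq1 a _ hFh
  have hr0 : r = 0 := by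
    have hbox := eq_boxPoly (mem_restrictSupport_mono hr fun d hd => hd.1)
    have hrJ : r ∈ jacIdeal a := by
      have : r = F * h - (u * FX + v * FY) := by rw [hrep]; ring
      rw [this]
      exact Ideal.sub_mem _ hmem (mem_jacIdeal.2 ⟨u, v, rfl⟩)
    rw [hbox] at hrJ
    rw [hbox, eq_zero_of_boxPoly_mem hp1 hq1 a hrJ]
    simp [boxPoly]
  rw [hr0, zero_add] at hrep
  set T : Ideal (MvPolynomial (Fin 2) K) := Ideal.span {FX, FY} ⊔ Ideal.span {F} with hT
  have hJT : Ideal.span {FX, FY} ≤ T := le_sup_left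
  have hFT : F ∈ T := le_sup_right (a := Ideal.span {FX, FY})
    (Ideal.mem_span_singleton_self F)
  have huT : u ∈ T := mem_of_mul_mem_of_eval_eq_zero hnode hJT (T.mul_mem_right _ hFT)
    fun Q hQ => ((hnode Q hQ).eval_eq_zero hrep).1
  have hvT : v ∈ T := mem_of_mul_mem_of_eval_eq_zero hnode hJT (T.mul_mem_right _ hFT)
    fun Q hQ => ((hnode Q hQ).eval_eq_zero hrep).2
  have hFYmem := pderiv_one_wPoly_mem_restrictSupport hp1 a
  have hFYtop := weightCoeff_pderiv_one_wPoly (q := q) hp1 a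
  have hu0 : u ≠ 0 := by
    intro hu0
    rw [hu0, zero_mul, zero_add] at hrep
    by_cases hv0 : v = 0
    · rw [hv0, zero_mul, mul_eq_zero] at hrep
      exact hne (hrep.resolve_left (wPoly_ne_zero hp1 a))
    · obtain ⟨d, -, hdm, hdc⟩ := exists_weightCoeff_ne_zero hp1 hco (hlt hv (by omega)) hv0
      have := weightCoeff_eq_zero_of_dvd hp1 a ⟨h, hrep.symm⟩
        (mul_mem_restrictSupport_le hdm hFYmem)
      rw [weightCoeff_mul hdm hFYmem] at this
      exact (mul_ne_zero hdc hFYtop) this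
  obtain ⟨d, hd, hdm, hdc⟩ := exists_weightCoeff_ne_zero hp1 hco (hlt hu (by omega)) hu0
  have hdw : expWeight p q d < (p - 1) * q := by
    have := (mem_restrictSupport_iff K).1 hu hd
    rw [Set.mem_ofPred_eq] at this
    omega
  have hex : ∃ w, ∃ m ∈ T, m ∈ restrictSupport K {e | expWeight p q e ≤ w} ∧
      weightCoeff p q w m ≠ 0 :=
    ⟨_, FY, hJT (Ideal.subset_span (Set.mem_insert_of_mem _ rfl)), hFYmem, hFYtop⟩
  classical
  obtain ⟨m, hmT, hmm, hmc⟩ := Nat.find_spec hex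
  set w := Nat.find hex with hw
  obtain ⟨x, hx, y, hy, hxy⟩ := Submodule.mem_sup.1 hmT
  obtain ⟨s, t, rfl⟩ := Ideal.mem_span_pair.1 hx
  obtain ⟨c, rfl⟩ := Ideal.mem_span_singleton'.1 hy
  obtain ⟨n, hn, hdvd⟩ := exists_sub_mem_dvd a hp1 (t * u - s * v)
  have hcong : F ∣ FY * n - u * m := by
    obtain ⟨k, hk⟩ := hdvd
    refine ⟨-(s * h + c * u) - FY * k, ?_⟩
    linear_combination u * hxy + s * hrep - FY * hk
  have hnT : n ∈ T := by
    have : n = (t * u - s * v) - (t * u - s * v - n) := by ring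
    rw [this]
    refine T.sub_mem (T.sub_mem (T.mul_mem_left _ huT) (T.mul_mem_left _ hvT)) ?_
    exact T.mem_of_dvd hdvd hFT
  have hn0 : n ≠ 0 := by
    intro hn0
    rw [hn0, mul_zero, zero_sub, dvd_neg] at hcong
    have := weightCoeff_eq_zero_of_dvd hp1 a hcong (mul_mem_restrictSupport_le hdm hmm)
    rw [weightCoeff_mul hdm hmm] at this
    exact (mul_ne_zero hdc hmc) this
  obtain ⟨e, -, hem, hec⟩ := exists_weightCoeff_ne_zero hp1 hco hn hn0
  have hle : w ≤ expWeight p q e := Nat.find_min' hex ⟨n, hnT, hem, hec⟩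
  have hum := mul_mem_restrictSupport_le hdm hmm
  have hFn := mul_mem_restrictSupport_le hFYmem hem
  have := weightCoeff_eq_zero_of_dvd hp1 a hcong (Submodule.sub_mem _ hFn
    (mem_restrictSupport_mono hum fun x hx => by rw [Set.mem_ofPred_eq] at *; omega))
  rw [weightCoeff_sub, weightCoeff_mul hFYmem hem, weightCoeff_eq_zero_of_lt hum (by omega),
    sub_zero] at this
  exact (mul_ne_zero hFYtop hec) this

/-- The residue pairing of the Jacobian algebra: there is a functional whose associated bilinear
form is triangular with respect to weights. -/
theorem exists_socle_functional [CharZero K] (hp : 1 < p) (hq : 1 < q) (hco : Nat.Coprime p q)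
    (a : idxSet p q → K) :
    ∃ φ : (MvPolynomial (Fin 2) K ⧸ jacIdeal a) →ₗ[K] K,
      ∀ c : BoxIdx p q → K, c ≠ 0 → ∃ i j : BoxIdx p q,
        boxPoly c ∈ restrictSupport K {d | expWeight p q d ≤ expWeight p q (boxExp i)} ∧
        expWeight p q (boxExp i) + expWeight p q (boxExp j) = (q - 2) * p + (p - 2) * q ∧
        φ (Ideal.Quotient.mk (jacIdeal a) (boxPoly c * monomial (boxExp j) 1)) ≠ 0 := by
  have hp1 : 1 ≤ p := hp.le
  have hq1 : 1 ≤ q := hq.le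
  let z : BoxIdx p q := (⟨q - 2, by omega⟩, ⟨p - 2, by omega⟩)
  have hz : expWeight p q (boxExp z) = (q - 2) * p + (p - 2) * q := by
    simp [expWeight, z]
  let φ := (jacBasis hp1 hq1 a).coord z
  have hφz : φ (Ideal.Quotient.mk (jacIdeal a) (monomial (boxExp z) 1)) = 1 := by
    rw [← jacBasis_apply hp1 hq1]
    simp [φ]
  have hφ : ∀ d, expWeight p q d < expWeight p q (boxExp z) →
      φ (Ideal.Quotient.mk (jacIdeal a) (monomial d 1)) = 0 := by
    intro d hd
    have hmem : monomial d (1 : K) ∈ restrictSupport K {e | expWeight p q e ≤ expWeight p q d} := by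
      rw [monomial_mem_restrictSupport]
      exact Or.inl (le_refl (expWeight p q d))
    obtain ⟨r, hr, u, -, v, -, h⟩ := exists_rep_pderiv hp1 hq1 a _ hmem
    have hbox := eq_boxPoly (mem_restrictSupport_mono hr fun d hd => hd.1)
    have hrepr := repr_mk_eq hp1 hq1 a (f := monomial d 1)
      (c := fun i => coeff (boxExp i) r) (by
        rw [← hbox]
        exact mem_jacIdeal.2 ⟨u, v, by rw [h]; ring⟩)
    simp only [φ, Module.Basis.coord_apply, hrepr]
    refine coeff_eq_zero_of_mem_restrictSupport hr fun hmem => ?_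
    have := hmem.2
    omega
  refine ⟨φ, fun c hc => ?_⟩
  classical
  obtain ⟨i₀, hi₀⟩ := Function.ne_iff.1 hc
  obtain ⟨i, hi, hmax⟩ := Finset.exists_max_image (Finset.univ.filter fun i => c i ≠ 0)
    (fun i => expWeight p q (boxExp i)) ⟨i₀, by simpa using hi₀⟩
  simp only [Finset.mem_filter, Finset.mem_univ, true_and] at hi hmax
  let j : BoxIdx p q := (⟨q - 2 - i.1, by omega⟩, ⟨p - 2 - i.2, by omega⟩)
  have hij : boxExp i + boxExp j = boxExp z := by
    have h1 := i.1.2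
    have h2 := i.2.2
    ext k
    fin_cases k
    · simp [j, z]; omega
    · simp [j, z]; omega
  refine ⟨i, j, ?_, by rw [← expWeight_add, hij, hz], ?_⟩
  · refine mem_restrictSupport_of_coeff fun d hd => ?_
    have hdb : d ∈ boxSet p q := by
      by_contra hn
      exact hd (coeff_boxPoly_of_notMem c hn)
    obtain ⟨k, rfl⟩ := exists_boxExp_eq hdb
    rw [coeff_boxPoly] at hd
    exact hmax k hd
  · have hsum : φ (Ideal.Quotient.mk (jacIdeal a) (boxPoly c * monomial (boxExp j) 1)) =
        ∑ k, c k * φ (Ideal.Quotient.mk (jacIdeal a) (monomial (boxExp k + boxExp j) 1)) := by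
      rw [boxPoly, Finset.sum_mul, map_sum, map_sum]
      refine Finset.sum_congr rfl fun k _ => ?_
      rw [mul_assoc, monomial_mul, one_mul, ← smul_eq_C_mul, ← Ideal.Quotient.mkₐ_eq_mk K,
        map_smul, map_smul, smul_eq_mul]
    rw [hsum, Finset.sum_eq_single i, hij, hφz, mul_one]
    · exact hi
    · intro k _ hki
      by_cases hck : c k = 0
      · rw [hck, zero_mul]
      · rw [hφ, mul_zero]
        rw [← hij, expWeight_add, expWeight_add, Nat.add_lt_add_iff_right]
        refine lt_of_le_of_ne (hmax k hck) fun heq => hki (boxExp_injective ?_)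
        refine eq_of_expWeight_eq hp1 hco ?_ ?_ heq
        · have := k.2.2
          rw [boxExp_one]; omega
        · have := i.2.2
          rw [boxExp_one]; omega
    · intro h
      exact absurd (Finset.mem_univ i) h

theorem eq_zero_of_functional_vanishing [IsAlgClosed K] [CharZero K] (hp : 1 < p) (hpq : p < q)
    (hco : Nat.Coprime p q) (a : idxSet p q → K)
    (hnode : ∀ Q, IsSingAt K (wPoly K p q a) Q → IsNodeAt K (wPoly K p q a) Q)
    (ψ : (MvPolynomial (Fin 2) K ⧸ jacIdeal a) →ₗ[K] K) (hψ : ∀ x, ψ (jacMul a x) = 0)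
    (hlow : ∀ d, expWeight p q d < p * q →
      ψ (Ideal.Quotient.mk (jacIdeal a) (monomial d 1)) = 0) : ψ = 0 := by
  have hp1 : 1 ≤ p := hp.le
  have hq1 : 1 ≤ q := by omega
  let b := jacBasis hp1 hq1 a
  have hfin : FiniteDimensional K (MvPolynomial (Fin 2) K ⧸ jacIdeal a) :=
    Module.Finite.of_basis b
  obtain ⟨φ, hφ⟩ := exists_socle_functional hp (by omega) hco a
  let D : (MvPolynomial (Fin 2) K ⧸ jacIdeal a) →ₗ[K]
      Module.Dual K (MvPolynomial (Fin 2) K ⧸ jacIdeal a) :=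
    (LinearMap.mul K (MvPolynomial (Fin 2) K ⧸ jacIdeal a)).compr₂ φ
  have hD : ∀ x y, D x y = φ (x * y) := fun x y => rfl
  have hDinj : Function.Injective D := by
    rw [← LinearMap.ker_eq_bot, LinearMap.ker_eq_bot']
    intro x hx
    by_contra hne
    have hc : ⇑(b.repr x) ≠ 0 := fun h => hne (b.repr.map_eq_zero_iff.1 (DFunLike.coe_injective h))
    obtain ⟨i, j, -, -, h⟩ := hφ _ hc
    rw [map_mul, mk_boxPoly_repr, ← hD, hx] at h
    exact h rfl
  have hDsurj : Function.Surjective D :=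
    (LinearMap.injective_iff_surjective_of_finrank_eq_finrank
      Subspace.dual_finrank_eq.symm).1 hDinj
  obtain ⟨x, hx⟩ := hDsurj ψ
  have hx0 : jacMul a x = 0 := by
    refine hDinj (LinearMap.ext fun y => ?_)
    have h1 : jacMul a x * y = x * jacMul a y := by
      simp only [jacMul, LinearMap.mul_apply']
      ring
    rw [hD, h1, ← hD, hx, hψ, map_zero, LinearMap.zero_apply]
  have hmk := mk_boxPoly_repr hp1 hq1 a x
  by_contra hne
  have hc : ⇑(b.repr x) ≠ 0 := fun h => hne (by
    rw [← hx, b.repr.map_eq_zero_iff.1 (DFunLike.coe_injective h), map_zero])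
  obtain ⟨i, j, hmem, hij, h⟩ := hφ _ hc
  rw [map_mul, hmk, ← hD, hx] at h
  have hj : p * q ≤ expWeight p q (boxExp j) := by
    by_contra hlt
    exact h (hlow _ (not_le.1 hlt))
  have hzero : boxPoly (b.repr x) = 0 := by
    refine eq_zero_of_wPoly_mul_mem_jacIdeal hp hpq hco a hnode
      (mem_restrictSupport_mono hmem fun d hd => ?_) ?_
    · rw [Set.mem_ofPred_eq] at *
      omega
    · rw [← Ideal.Quotient.eq_zero_iff_mem, ← jacMul_mk, hmk, hx0]
  refine hc (funext fun i => ?_)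
  rw [← coeff_boxPoly (⇑(b.repr x)) i, hzero, coeff_zero, Pi.zero_apply]

theorem linearIndependent_nodeLinForm [IsAlgClosed K] [CharZero K] (hp : 1 < p) (hpq : p < q)
    (hco : Nat.Coprime p q) (a : idxSet p q → K) {l : ℕ} {P : Fin l → K × K}
    (hinj : Function.Injective P) (hP : ∀ i, IsNodeAt K (wPoly K p q a) (P i))
    (hall : ∀ Q, IsSingAt K (wPoly K p q a) Q → ∃ i, Q = P i) :
    LinearIndependent K fun i : Fin l => nodeLinForm K p q (P i).1 (P i).2 := by
  classical
  rw [Fintype.linearIndependent_iff]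
  intro c hc i
  let ψ : (MvPolynomial (Fin 2) K ⧸ jacIdeal a) →ₗ[K] K :=
    (∑ j, c j • LinearMap.proj j) ∘ₗ jacEval a P fun i => (hP i).1
  have hψ : ∀ x, ψ x = ∑ j, c j * jacEval a P (fun i => (hP i).1) x j := fun x => by
    simp [ψ]
  have hψ0 : ψ = 0 := by
    refine eq_zero_of_functional_vanishing hp hpq hco a ?_ ψ ?_ ?_
    · intro Q hQ
      obtain ⟨i, rfl⟩ := hall Q hQ
      exact hP i
    · intro x
      rw [hψ, jacEval_jacMul]
      simp
    · intro d hd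
      have hidx : (d 0, d 1) ∈ idxSet p q := by
        rw [expWeight] at hd
        simp only [idxSet, Finset.mem_filter, Finset.mem_product, Finset.mem_range]
        refine ⟨⟨Nat.lt_of_mul_lt_mul_right (a := p) ?_,
          Nat.lt_of_mul_lt_mul_right (a := q) ?_⟩, hd⟩
        · rw [mul_comm q p]; omega
        · omega
      have := congrArg (coeff (Finsupp.single ⟨(d 0, d 1), hidx⟩ 1)) hc
      simp only [nodeLinForm, coeff_sum, coeff_smul, coeff_C_mul, coeff_X, coeff_zero,
        smul_eq_mul] at this
      rw [hψ]
      refine Eq.trans ?_ this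
      refine Finset.sum_congr rfl fun j _ => ?_
      rw [jacEval_mk]
      congr 1
      rw [Finset.sum_eq_single ⟨(d 0, d 1), hidx⟩]
      · rw [if_pos rfl, eval_monomial, Finsupp.prod_fintype _ _ (fun _ => pow_zero _),
          Fin.prod_univ_two]
        simp
      · intro k _ hk
        rw [if_neg (fun h => hk (Finsupp.single_left_injective one_ne_zero h)), mul_zero]
      · intro h
        exact absurd (Finset.mem_univ _) h
  obtain ⟨f, hf⟩ := exists_eval_eq_ite hinj i
  have h := hψ (Ideal.Quotient.mk (jacIdeal a) f)
  rw [hψ0, LinearMap.zero_apply] at h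
  simp only [jacEval_mk, hf] at h
  simpa using h.symm

end LinearIndependence

/-- Let `C_a` be a nodal curve with exactly `l ≥ 1` nodes `(ξ_1,η_1), …, (ξ_l,η_l)`, and
expand `Δ` in the shifted variables `T_νμ = A_νμ − a_νμ`. Then all homogeneous components
of degree `< l` vanish, the homogeneous component of degree `l` equals `e·∏ᵢ Lᵢ` for some
`e ≠ 0`, where `Lᵢ = Σ ξᵢ^ν ηᵢ^μ T_νμ`, and `L₁, …, L_l` are linearly independent over `K`. -/
theorem lowest_term_of_delta_at_nodal_curve
    (K : Type) [Field K] [IsAlgClosed K] [CharZero K]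
    (p q : ℕ) (hp : 1 < p) (hpq : p < q) (hco : Nat.Coprime p q)
    (a : idxSet p q → K) (l : ℕ) (hl : 1 ≤ l)
    (P : Fin l → K × K) (hPinj : Function.Injective P)
    (hsing : ∀ Q : K × K, IsSingAt K (wPoly K p q a) Q ↔ ∃ i, Q = P i)
    (hnode : ∀ i, IsNodeAt K (wPoly K p q a) (P i)) :
    (∀ m : ℕ, m < l →
      homogeneousComponent m
        (aeval (fun i : idxSet p q => X i + C (a i)) (genDelta K p q)) = 0) ∧
    (∃ e : K, e ≠ 0 ∧
      homogeneousComponent l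
          (aeval (fun i : idxSet p q => X i + C (a i)) (genDelta K p q)) =
        C e * ∏ i : Fin l, nodeLinForm K p q (P i).1 (P i).2) ∧
    LinearIndependent K (fun i : Fin l => nodeLinForm K p q (P i).1 (P i).2) := by
  have hall := fun Q h => (hsing Q).1 h
  obtain ⟨h₁, h₂⟩ :=
    homogeneousComponent_shift_genDelta hp.le (hp.trans hpq).le a hPinj hnode hall
  exact ⟨h₁, h₂, linearIndependent_nodeLinForm hp hpq hco a hPinj hnode hall⟩
end

section
/- Let α ≠ β be points of K^I such that C_α and C_β are both singular and such that the set Sing(C_α) ∩ Sing(C_β) of common singular points is nonempty, and let L = {α + t(β−α) : t ∈ K} be the line through α and β. Then for every γ ∈ L the curve C_γ is singular, and for all but finitely many γ ∈ L the set of singular points of C_γ equals Sing(C_α) ∩ Sing(C_β). -/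
open MvPolynomial

open Polynomial TensorProduct in
/-- In characteristic zero, the differential of a transcendental element of a finitely generated
field extension does not vanish. -/
theorem kaehlerDifferential_D_ne_zero_of_transcendental {K E : Type*} [Field K] [CharZero K]
    [Field E] [Algebra K E] [Algebra.EssFiniteType K E] {s : E} (hs : Transcendental K s) :
    KaehlerDifferential.D K E s ≠ 0 := by
  let : Algebra K[X] E := (Polynomial.aeval s).toRingHom.toAlgebra
  have hmap : ∀ f : K[X], algebraMap K[X] E f = Polynomial.aeval s f := fun _ => rfl
  have : IsScalarTower K K[X] E := .of_algebraMap_eq fun r => by simp [hmap]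
  have : FaithfulSMul K[X] E :=
    (faithfulSMul_iff_algebraMap_injective _ _).2 (transcendental_iff_injective.1 hs)
  let : Algebra (FractionRing K[X]) E := FractionRing.liftAlgebra K[X] E
  have : Algebra.EssFiniteType K[X] E := .of_comp K _ _
  have : Algebra.EssFiniteType (FractionRing K[X]) E := .of_comp K[X] _ _
  have : Algebra.FormallySmooth K[X] (FractionRing K[X]) :=
    .of_isLocalization (nonZeroDivisors _)
  have : Algebra.FormallySmooth K[X] E := .comp _ (FractionRing K[X]) _
  have hinj : Function.Injective (KaehlerDifferential.mapBaseChange K K[X] E) := by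
    rw [injective_iff_map_eq_zero]
    intro z hz
    obtain ⟨w, rfl⟩ := (Algebra.H1Cotangent.exact_δ_mapBaseChange K K[X] E z).1 hz
    rw [Subsingleton.elim w 0, map_zero]
  intro h
  have h1 : (1 : E) ⊗ₜ[K[X]] KaehlerDifferential.D K K[X] Polynomial.X = 0 :=
    hinj (by simp [hmap, h])
  have h2 := congrArg (TensorProduct.rid K[X] E)
    (congrArg (LinearMap.lTensor E (KaehlerDifferential.polynomialEquiv K).toLinearMap) h1)
  simp at h2

/-- The chain rule for a derivation applied to the value of a polynomial. -/
theorem Derivation.map_mvPolynomial_aeval {K E M σ : Type*} [CommRing K] [CommRing E] [Algebra K E]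
    [AddCommGroup M] [Module K M] [Module E M] [IsScalarTower K E M] [Fintype σ]
    (D : Derivation K E M) (x : σ → E) (G : MvPolynomial σ K) :
    D (aeval x G) = ∑ i, aeval x (pderiv i G) • D (x i) := by
  classical
  induction G using MvPolynomial.induction_on with
  | C a => simp
  | add f g hf hg => simp [hf, hg, add_smul, Finset.sum_add_distrib]
  | mul_X f j hf =>
    simp only [map_mul, aeval_X, Derivation.leibniz, hf, pderiv_X, map_add, smul_eq_mul,
      add_smul, Finset.sum_add_distrib, Finset.smul_sum, mul_smul, Pi.single_apply]
    congr 1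
    rw [Finset.sum_eq_single j]
    · simp
    · intro b _ hb
      simp [hb.symm]
    · simp

/-- An element of an extension of an algebraically closed field that is algebraic over it lies in
it. -/
theorem mem_range_algebraMap_of_isAlgebraic {K E : Type*} [Field K] [IsAlgClosed K] [Field E]
    [Algebra K E] {s : E} (hs : IsAlgebraic K s) : s ∈ (algebraMap K E).range := by
  have := IntermediateField.isAlgebraic_adjoin_simple hs.isIntegral
  have hbot := IntermediateField.eq_bot_of_isAlgClosed_of_isAlgebraic
    (IntermediateField.adjoin K {s})
  have hmem := IntermediateField.mem_adjoin_simple_self K s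
  rw [hbot, IntermediateField.mem_bot] at hmem
  exact hmem

/-- A rational function `F / H` whose differential vanishes along an irreducible subvariety not
contained in `H = 0` is constant on it. -/
theorem exists_sub_C_mul_mem_of_isPrime {K σ : Type*} [Field K] [IsAlgClosed K] [CharZero K]
    [Fintype σ] (P : Ideal (MvPolynomial σ K)) [P.IsPrime] {F H : MvPolynomial σ K}
    (hH : H ∉ P) (hd : ∀ i, H * pderiv i F - F * pderiv i H ∈ P) :
    ∃ c : K, F - C c * H ∈ P := by
  let E := FractionRing (MvPolynomial σ K ⧸ P)
  let φ : MvPolynomial σ K →ₐ[K] E :=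
    (IsScalarTower.toAlgHom K (MvPolynomial σ K ⧸ P) E).comp (Ideal.Quotient.mkₐ K P)
  have hφ : ∀ G, φ G = 0 ↔ G ∈ P := fun G => by
    change algebraMap (MvPolynomial σ K ⧸ P) E (Ideal.Quotient.mk P G) = 0 ↔ _
    rw [FaithfulSMul.algebraMap_eq_zero_iff, Ideal.Quotient.eq_zero_iff_mem]
  have hφa : φ = aeval (fun i => φ (X i)) := by ext; simp
  have hH0 : φ H ≠ 0 := fun h => hH ((hφ H).1 h)
  have hD : ∀ G, KaehlerDifferential.D K E (φ G) =
      ∑ i, φ (pderiv i G) • KaehlerDifferential.D K E (φ (X i)) := fun G => by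
    rw [hφa, Derivation.map_mvPolynomial_aeval]
    simp
  have halg : IsAlgebraic K (φ F / φ H) := by
    by_contra hs
    refine kaehlerDifferential_D_ne_zero_of_transcendental hs ?_
    rw [Derivation.leibniz_div, hD, hD, Finset.smul_sum, Finset.smul_sum,
      ← Finset.sum_sub_distrib, Finset.sum_eq_zero, smul_zero]
    intro i _
    have h := (hφ _).2 (hd i)
    rw [smul_smul, smul_smul, ← sub_smul, ← map_mul, ← map_mul, ← map_sub, h, zero_smul]
  obtain ⟨c, hc⟩ := mem_range_algebraMap_of_isAlgebraic halg
  refine ⟨c, (hφ _).1 ?_⟩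
  have hC : φ (C c) = φ F / φ H := by rw [← hc, ← algebraMap_eq, AlgHom.commutes]
  rw [map_sub, map_mul, hC, div_mul_cancel₀ _ hH0, sub_self]

/-- A pencil `F + t H` has only finitely many members with a singular point off its base locus. -/
theorem finite_setOf_singular_off_base_locus {K σ : Type*} [Field K] [IsAlgClosed K] [CharZero K]
    [Fintype σ] (F H : MvPolynomial σ K) :
    {t : K | ∃ x : σ → K, eval x F + t * eval x H = 0 ∧ eval x H ≠ 0 ∧
      ∀ i, eval x (pderiv i F) + t * eval x (pderiv i H) = 0}.Finite := by
  let J : Ideal (MvPolynomial σ K) :=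
    Ideal.span (Set.range fun i => H * pderiv i F - F * pderiv i H)
  have hex : ∀ P : Ideal (MvPolynomial σ K), ∃ c : K, P ∈ J.minimalPrimes → H ∉ P →
      F - C c * H ∈ P := by
    intro P
    by_cases h : P ∈ J.minimalPrimes ∧ H ∉ P
    · have : P.IsPrime := h.1.1.1
      obtain ⟨c, hc⟩ := exists_sub_C_mul_mem_of_isPrime P h.2
        fun i => h.1.1.2 (Ideal.subset_span ⟨i, rfl⟩)
      exact ⟨c, fun _ _ => hc⟩
    · exact ⟨0, fun h1 h2 => (h ⟨h1, h2⟩).elim⟩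
  choose c hc using hex
  refine (J.finite_minimalPrimes_of_isNoetherianRing.image fun P => -c P).subset ?_
  rintro t ⟨x, h0, hH, hd⟩
  have hle : J ≤ RingHom.ker (eval x) := by
    rw [Ideal.span_le]
    rintro _ ⟨i, rfl⟩
    simp only [SetLike.mem_coe, RingHom.mem_ker, map_sub, map_mul]
    linear_combination eval x H * hd i - eval x (pderiv i H) * h0
  have : (RingHom.ker (eval x)).IsPrime := RingHom.ker_isPrime _
  obtain ⟨P, hP, hPx⟩ := Ideal.exists_minimalPrimes_le hle
  refine ⟨P, hP, ?_⟩
  have h := hPx (hc P hP fun h => hH (hPx h))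
  simp only [RingHom.mem_ker, map_sub, map_mul, eval_C] at h
  apply mul_right_cancel₀ hH
  linear_combination h - h0

theorem mem_idxSet {p q : ℕ} (i : idxSet p q) :
    (i : ℕ × ℕ).2 < p ∧ (i : ℕ × ℕ).1 * p + (i : ℕ × ℕ).2 * q < p * q := by
  have h := i.2
  simp only [idxSet, Finset.mem_filter, Finset.mem_product, Finset.mem_range] at h
  exact ⟨h.1.2, h.2⟩

/-- Distinct monomials with exponents in `idxSet p q` have distinct weights. -/
theorem eq_of_weight_eq {p q : ℕ} (hco : Nat.Coprime p q) {i j : idxSet p q}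
    (h : (i : ℕ × ℕ).1 * p + (i : ℕ × ℕ).2 * q = (j : ℕ × ℕ).1 * p + (j : ℕ × ℕ).2 * q) :
    i = j := by
  have hi := (mem_idxSet i).1
  have hj := (mem_idxSet j).1
  have hmod : (i : ℕ × ℕ).2 * q ≡ (j : ℕ × ℕ).2 * q [MOD p] := by
    have h' : ((i : ℕ × ℕ).1 * p + (i : ℕ × ℕ).2 * q) % p =
      ((j : ℕ × ℕ).1 * p + (j : ℕ × ℕ).2 * q) % p := by rw [h]
    simpa [Nat.ModEq, Nat.add_mod] using h'
  have h2 : (i : ℕ × ℕ).2 = (j : ℕ × ℕ).2 :=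
    (Nat.ModEq.cancel_right_of_coprime hco hmod).eq_of_lt_of_lt hi hj
  rw [h2] at h
  exact Subtype.ext (Prod.ext (Nat.eq_of_mul_eq_mul_right (by lia) (Nat.add_right_cancel h)) h2)

section Valuation

variable {E Γ : Type*} [Field E] [LinearOrderedCommGroupWithZero Γ] {p q : ℕ}

/-- At a place at infinity of a curve of type `p, q`, the pole orders of `y` and `x` are in
proportion `q : p`. -/
theorem valuation_pow_eq_of_pole (v : Valuation E Γ) {x y : E} (a : idxSet p q → E)
    (ha : ∀ i, v (a i) ≤ 1) (hxy : 1 < v x ∨ 1 < v y) (hp : 0 < p) (hq : 0 < q)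
    (hF : y ^ p - x ^ q + ∑ i : idxSet p q, a i * x ^ (i : ℕ × ℕ).1 * y ^ (i : ℕ × ℕ).2 = 0) :
    v y ^ p = v x ^ q := by
  have hterm : ∀ i : idxSet p q, v (a i * x ^ (i : ℕ × ℕ).1 * y ^ (i : ℕ × ℕ).2) ≤
      v x ^ (i : ℕ × ℕ).1 * v y ^ (i : ℕ × ℕ).2 := fun i => by
    rw [map_mul, map_mul, map_pow, map_pow, mul_assoc]
    exact mul_le_of_le_one_left' (ha i)
  rcases lt_trichotomy (v x ^ q) (v y ^ p) with h | h | h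
  · have hy : 1 < v y := by
      rcases hxy with hx | hy
      · exact (one_lt_pow_iff hp.ne').1 ((one_lt_pow₀ hx hq.ne').trans h)
      · exact hy
    have hsum : v (∑ i : idxSet p q, a i * x ^ (i : ℕ × ℕ).1 * y ^ (i : ℕ × ℕ).2) < v y ^ p := by
      refine v.map_sum_lt (pow_ne_zero _ (zero_lt_one.trans hy).ne') fun i _ =>
        (hterm i).trans_lt (lt_of_pow_lt_pow_left₀ q zero_le ?_)
      calc (v x ^ (i : ℕ × ℕ).1 * v y ^ (i : ℕ × ℕ).2) ^ q
          = (v x ^ q) ^ (i : ℕ × ℕ).1 * v y ^ ((i : ℕ × ℕ).2 * q) := by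
            rw [mul_pow, ← pow_mul, ← pow_mul, ← pow_mul, mul_comm q]
        _ ≤ (v y ^ p) ^ (i : ℕ × ℕ).1 * v y ^ ((i : ℕ × ℕ).2 * q) := by gcongr
        _ = v y ^ ((i : ℕ × ℕ).1 * p + (i : ℕ × ℕ).2 * q) := by
            rw [← pow_mul, pow_add, mul_comm p]
        _ < v y ^ (p * q) := pow_lt_pow_right₀ hy (mem_idxSet i).2
        _ = (v y ^ p) ^ q := pow_mul _ _ _
    have hlt := v.map_sub_lt ((v.map_pow x q).trans_lt h) hsum
    rw [show x ^ q - _ = y ^ p by linear_combination -hF, v.map_pow] at hlt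
    exact (lt_irrefl _ hlt).elim
  · exact h.symm
  · have hx : 1 < v x := by
      rcases hxy with hx | hy
      · exact hx
      · exact (one_lt_pow_iff hq.ne').1 ((one_lt_pow₀ hy hp.ne').trans h)
    have hsum : v (∑ i : idxSet p q, a i * x ^ (i : ℕ × ℕ).1 * y ^ (i : ℕ × ℕ).2) < v x ^ q := by
      refine v.map_sum_lt (pow_ne_zero _ (zero_lt_one.trans hx).ne') fun i _ =>
        (hterm i).trans_lt (lt_of_pow_lt_pow_left₀ p zero_le ?_)
      calc (v x ^ (i : ℕ × ℕ).1 * v y ^ (i : ℕ × ℕ).2) ^ p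
          = v x ^ ((i : ℕ × ℕ).1 * p) * (v y ^ p) ^ (i : ℕ × ℕ).2 := by
            rw [mul_pow, ← pow_mul, ← pow_mul, ← pow_mul, mul_comm p]
        _ ≤ v x ^ ((i : ℕ × ℕ).1 * p) * (v x ^ q) ^ (i : ℕ × ℕ).2 := by gcongr
        _ = v x ^ ((i : ℕ × ℕ).1 * p + (i : ℕ × ℕ).2 * q) := by
            rw [← pow_mul, pow_add, mul_comm q]
        _ < v x ^ (p * q) := pow_lt_pow_right₀ hx (mem_idxSet i).2
        _ = (v x ^ q) ^ p := by rw [mul_comm, pow_mul]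
    have hlt := v.map_add_lt ((v.map_pow y p).trans_lt h) hsum
    rw [show y ^ p + _ = x ^ q by linear_combination hF, v.map_pow] at hlt
    exact (lt_irrefl _ hlt).elim

/-- At a place where the pole orders of `y` and `x` are in proportion `q : p`, a nonzero
combination of the monomials with exponents in `idxSet p q` does not vanish. -/
theorem sum_ne_zero_of_valuation_pow_eq (hco : Nat.Coprime p q) (v : Valuation E Γ) {x y : E}
    (hx : 1 < v x) (hy : y ≠ 0) (hxy : v y ^ p = v x ^ q) (b : idxSet p q → E) (hb : b ≠ 0)
    (hbv : ∀ i, b i ≠ 0 → v (b i) = 1) :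
    ∑ i : idxSet p q, b i * x ^ (i : ℕ × ℕ).1 * y ^ (i : ℕ × ℕ).2 ≠ 0 := by
  classical
  have hx0 : v x ≠ 0 := (zero_lt_one.trans hx).ne'
  have hy0 : v y ≠ 0 := v.ne_zero_iff.2 hy
  let w : idxSet p q → ℕ := fun i => (i : ℕ × ℕ).1 * p + (i : ℕ × ℕ).2 * q
  obtain ⟨i₀, hi₀, hmax⟩ := Finset.exists_max_image
    (Finset.univ.filter fun i => b i ≠ 0) w
    (by obtain ⟨i, hi⟩ := Function.ne_iff.1 hb; exact ⟨i, by simpa using hi⟩)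
  have hb₀ : b i₀ ≠ 0 := by simpa using hi₀
  have hterm : ∀ i, b i ≠ 0 → v (b i * x ^ (i : ℕ × ℕ).1 * y ^ (i : ℕ × ℕ).2) ^ p = v x ^ w i := by
    intro i hi
    rw [map_mul, map_mul, hbv i hi, one_mul, map_pow, map_pow, mul_pow, ← pow_mul, ← pow_mul,
      mul_comm _ p, mul_comm _ p, pow_mul (v y), hxy, ← pow_mul, ← pow_add]
    congr 1
    simp only [w]
    ring
  have hlt : v (∑ i ∈ Finset.univ.erase i₀, b i * x ^ (i : ℕ × ℕ).1 * y ^ (i : ℕ × ℕ).2) <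
      v (b i₀ * x ^ (i₀ : ℕ × ℕ).1 * y ^ (i₀ : ℕ × ℕ).2) := by
    have hne : v (b i₀ * x ^ (i₀ : ℕ × ℕ).1 * y ^ (i₀ : ℕ × ℕ).2) ≠ 0 := by
      simp [hbv i₀ hb₀, hx0, hy0]
    refine v.map_sum_lt hne fun i hi => ?_
    by_cases hbi : b i = 0
    · simpa [hbi] using zero_lt_iff.2 hne
    · refine lt_of_pow_lt_pow_left₀ p zero_le ?_
      rw [hterm i hbi, hterm i₀ hb₀]
      refine pow_lt_pow_right₀ hx (lt_of_le_of_ne (hmax i (by simpa using hbi)) fun h => ?_)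
      exact Finset.ne_of_mem_erase hi (eq_of_weight_eq hco h)
  rw [← Finset.add_sum_erase _ _ (Finset.mem_univ i₀)]
  intro h
  rw [eq_neg_of_add_eq_zero_right h, v.map_neg] at hlt
  exact lt_irrefl _ hlt

end Valuation

/-- An element of a field extension that does not belong to the algebraically closed base field
has a pole at some place trivial on the base field. -/
theorem exists_valuationSubring_notMem {K E : Type*} [Field K] [IsAlgClosed K] [Field E]
    [Algebra K E] {z : E} (hz : z ∉ (algebraMap K E).range) :
    ∃ V : ValuationSubring E, z ∉ V ∧ (∀ c : K, V.valuation (algebraMap K E c) ≤ 1) ∧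
      ∀ c : K, c ≠ 0 → V.valuation (algebraMap K E c) = 1 := by
  have hz' : z ∉ (integralClosure K E).toSubring := fun h =>
    hz (mem_range_algebraMap_of_isAlgebraic (IsIntegral.isAlgebraic h))
  obtain ⟨V, hV, hzV⟩ := Subring.exists_le_valuationSubring_of_isIntegrallyClosedIn hz'
  have hle : ∀ c : K, V.valuation (algebraMap K E c) ≤ 1 := fun c =>
    (V.valuation_le_one_iff _).2 (hV ((integralClosure K E).algebraMap_mem c))
  refine ⟨V, hzV, hle, fun c hc => (hle c).antisymm ?_⟩
  have h := hle c⁻¹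
  rw [map_inv₀, map_inv₀] at h
  exact (inv_le_one₀ (zero_lt_iff.2 (by simpa using hc))).1 h

/-- A curve of type `p, q` meets the zero set of a nonzero combination of the monomials with
exponents in `idxSet p q` only in points with coordinates in the base field. -/
theorem mem_range_algebraMap_of_common_zero {K E : Type*} [Field K] [IsAlgClosed K] [Field E]
    [Algebra K E] {p q : ℕ} (hp : 0 < p) (hq : 0 < q) (hco : Nat.Coprime p q)
    (a b : idxSet p q → K) (hb : b ≠ 0) {x y : E}
    (hF : y ^ p - x ^ q + ∑ i : idxSet p q,
      algebraMap K E (a i) * x ^ (i : ℕ × ℕ).1 * y ^ (i : ℕ × ℕ).2 = 0)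
    (hH : ∑ i : idxSet p q,
      algebraMap K E (b i) * x ^ (i : ℕ × ℕ).1 * y ^ (i : ℕ × ℕ).2 = 0) :
    x ∈ (algebraMap K E).range ∧ y ∈ (algebraMap K E).range := by
  have key : ∀ z, z = x ∨ z = y → z ∈ (algebraMap K E).range := by
    intro z hz
    by_contra hzK
    obtain ⟨V, hzV, hle, hone⟩ := exists_valuationSubring_notMem hzK
    have hz1 : 1 < V.valuation z := not_le.1 (mt (V.valuation_le_one_iff z).1 hzV)
    have hxy : 1 < V.valuation x ∨ 1 < V.valuation y := by
      rcases hz with rfl | rfl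
      exacts [.inl hz1, .inr hz1]
    have heq := valuation_pow_eq_of_pole V.valuation _ (fun i => hle (a i)) hxy hp hq hF
    have hx1 : 1 < V.valuation x := by
      rcases hxy with h | h
      · exact h
      · exact (one_lt_pow_iff hq.ne').1 (heq ▸ one_lt_pow₀ h hp.ne')
    have hy0 : y ≠ 0 := by
      rintro rfl
      rw [map_zero, zero_pow hp.ne'] at heq
      exact (pow_ne_zero q (zero_lt_one.trans hx1).ne') heq.symm
    refine sum_ne_zero_of_valuation_pow_eq hco V.valuation hx1 hy0 heq
      (fun i => algebraMap K E (b i)) ?_ (fun i hi => hone _ (by simpa using hi)) hH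
    obtain ⟨i, hi⟩ := Function.ne_iff.1 hb
    exact Function.ne_iff.2 ⟨i, by simpa using hi⟩
  exact ⟨key x (.inl rfl), key y (.inr rfl)⟩

/-- The base locus of a pencil of curves of type `p, q` is finite. -/
theorem finite_base_locus {K : Type} [Field K] [IsAlgClosed K] {p q : ℕ} (hp : 0 < p) (hq : 0 < q)
    (hco : Nat.Coprime p q) {α β : idxSet p q → K} (hne : α ≠ β) :
    {P : K × K | eval ![P.1, P.2] (wPoly K p q α) = 0 ∧
      eval ![P.1, P.2] (wPoly K p q β) = 0}.Finite := by
  let J : Ideal (MvPolynomial (Fin 2) K) := Ideal.span {wPoly K p q α, wPoly K p q β}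
  have hex : ∀ Q : Ideal (MvPolynomial (Fin 2) K), ∃ P : K × K, Q ∈ J.minimalPrimes →
      X 0 - C P.1 ∈ Q ∧ X 1 - C P.2 ∈ Q := by
    intro Q
    by_cases hQ : Q ∈ J.minimalPrimes
    · have : Q.IsPrime := hQ.1.1
      let E := FractionRing (MvPolynomial (Fin 2) K ⧸ Q)
      let φ : MvPolynomial (Fin 2) K →ₐ[K] E :=
        (IsScalarTower.toAlgHom K (MvPolynomial (Fin 2) K ⧸ Q) E).comp (Ideal.Quotient.mkₐ K Q)
      have hφ : ∀ G, φ G = 0 ↔ G ∈ Q := fun G => by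
        change algebraMap (MvPolynomial (Fin 2) K ⧸ Q) E (Ideal.Quotient.mk Q G) = 0 ↔ _
        rw [FaithfulSMul.algebraMap_eq_zero_iff, Ideal.Quotient.eq_zero_iff_mem]
      have hC : ∀ c, φ (C c) = algebraMap K E c := fun c => by
        rw [← algebraMap_eq, AlgHom.commutes]
      have hα := (hφ _).2 (hQ.1.2 (Ideal.subset_span (Set.mem_insert _ _)))
      have hβ := (hφ _).2 (hQ.1.2 (Ideal.subset_span (Set.mem_insert_of_mem _ rfl)))
      simp only [wPoly, map_add, map_sub, map_sum, map_mul, map_pow, hC] at hα hβ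
      obtain ⟨⟨c, hc⟩, ⟨d, hd⟩⟩ := mem_range_algebraMap_of_common_zero hp hq hco α (β - α)
        (sub_ne_zero.2 hne.symm) hα (by
          simp only [Pi.sub_apply, map_sub, sub_mul, Finset.sum_sub_distrib]
          linear_combination hβ - hα)
      refine ⟨(c, d), fun _ => ⟨(hφ _).1 ?_, (hφ _).1 ?_⟩⟩
      · rw [map_sub, hC, hc, sub_self]
      · rw [map_sub, hC, hd, sub_self]
    · exact ⟨0, fun h => (hQ h).elim⟩
  choose P hP using hex
  refine (J.finite_minimalPrimes_of_isNoetherianRing.image P).subset ?_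
  rintro R ⟨hα, hβ⟩
  have hle : J ≤ RingHom.ker (eval ![R.1, R.2]) := by
    rw [Ideal.span_le, Set.insert_subset_iff, Set.singleton_subset_iff]
    exact ⟨hα, hβ⟩
  have : (RingHom.ker (eval ![R.1, R.2])).IsPrime := RingHom.ker_isPrime _
  obtain ⟨Q, hQ, hQR⟩ := Ideal.exists_minimalPrimes_le hle
  have h0 := hQR (hP Q hQ).1
  have h1 := hQR (hP Q hQ).2
  simp only [RingHom.mem_ker, map_sub, eval_X, eval_C, Matrix.cons_val_zero, Matrix.cons_val_one,
    sub_eq_zero] at h0 h1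
  exact ⟨Q, hQ, Prod.ext h0.symm h1.symm⟩

/-- `F_γ` depends affinely on `γ`. -/
theorem wPoly_line {K : Type} [CommRing K] {p q : ℕ} (α β : idxSet p q → K) (t : K) :
    wPoly K p q (fun i => α i + t * (β i - α i)) =
      wPoly K p q α + C t * (wPoly K p q β - wPoly K p q α) := by
  have h : ∑ i : idxSet p q, C (α i + t * (β i - α i)) * X 0 ^ (i : ℕ × ℕ).1 *
      X 1 ^ (i : ℕ × ℕ).2 = ∑ i : idxSet p q, C (α i) * X 0 ^ (i : ℕ × ℕ).1 *
      X 1 ^ (i : ℕ × ℕ).2 + C t * (∑ i : idxSet p q, C (β i) * X 0 ^ (i : ℕ × ℕ).1 *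
      X 1 ^ (i : ℕ × ℕ).2 - ∑ i : idxSet p q, C (α i) * X 0 ^ (i : ℕ × ℕ).1 *
      X (1 : Fin 2) ^ (i : ℕ × ℕ).2) := by
    rw [← Finset.sum_sub_distrib, Finset.mul_sum, ← Finset.sum_add_distrib]
    refine Finset.sum_congr rfl fun i _ => ?_
    simp only [map_add, map_mul, map_sub]
    ring
  simp only [wPoly, h]
  ring

theorem isSingAt_wPoly_line_iff {K : Type} [CommRing K] {p q : ℕ} (α β : idxSet p q → K) (t : K)
    (P : K × K) :
    IsSingAt K (wPoly K p q fun i => α i + t * (β i - α i)) P ↔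
      (eval ![P.1, P.2] (wPoly K p q α) +
        t * eval ![P.1, P.2] (wPoly K p q β - wPoly K p q α) = 0) ∧
      ∀ i, eval ![P.1, P.2] (pderiv i (wPoly K p q α)) +
        t * eval ![P.1, P.2] (pderiv i (wPoly K p q β - wPoly K p q α)) = 0 := by
  rw [wPoly_line, IsSingAt, Fin.forall_fin_two]
  simp

theorem isSingAt_wPoly_line_of_common {K : Type} [CommRing K] {p q : ℕ} {α β : idxSet p q → K}
    {P : K × K} (hα : IsSingAt K (wPoly K p q α) P) (hβ : IsSingAt K (wPoly K p q β) P) (t : K) :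
    IsSingAt K (wPoly K p q fun i => α i + t * (β i - α i)) P := by
  rw [isSingAt_wPoly_line_iff, Fin.forall_fin_two]
  simp [hα.1, hα.2.1, hα.2.2, hβ.1, hβ.2.1, hβ.2.2]

/-- A base point that is not singular on both `C_α` and `C_β` is singular on at most one curve of
the pencil. -/
theorem subsingleton_setOf_isSingAt_wPoly_line {K : Type} [Field K] {p q : ℕ}
    {α β : idxSet p q → K} {P : K × K}
    (hP : ¬ (IsSingAt K (wPoly K p q α) P ∧ IsSingAt K (wPoly K p q β) P)) :
    {t : K | IsSingAt K (wPoly K p q fun i => α i + t * (β i - α i)) P}.Subsingleton := by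
  intro s hs t ht
  by_contra hst
  refine hP ?_
  have h0 : ∀ {f h : K}, f + s * h = 0 → f + t * h = 0 → f = 0 ∧ h = 0 := by
    intro f h h1 h2
    have hh : h = 0 := by
      refine (mul_eq_zero.1 ?_).resolve_left (sub_ne_zero.2 hst)
      linear_combination h1 - h2
    exact ⟨by simpa [hh] using h1, hh⟩
  simp only [Set.mem_ofPred_eq, isSingAt_wPoly_line_iff, Fin.forall_fin_two] at hs ht
  have hv := h0 hs.1 ht.1
  have hx := h0 hs.2.1 ht.2.1
  have hy := h0 hs.2.2 ht.2.2
  simp only [map_sub] at hv hx hy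
  exact ⟨⟨hv.1, hx.1, hy.1⟩, by simpa [hv.1] using hv.2, by simpa [hx.1] using hx.2,
    by simpa [hy.1] using hy.2⟩

/-- **Proposition 1.8.** If `α ≠ β`, the curves `C_α`, `C_β` are singular and have a common
singular point, then every curve `C_γ` for `γ` on the line through `α` and `β` is singular,
and for all but finitely many `γ` on this line `Sing(C_γ) = Sing(C_α) ∩ Sing(C_β)`. -/
theorem line_through_curves_with_common_singularities
    (K : Type) [Field K] [IsAlgClosed K] [CharZero K]
    (p q : ℕ) (hp : 1 < p) (hpq : p < q) (hco : Nat.Coprime p q)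
    (α β : idxSet p q → K) (hne : α ≠ β)
    (hαsing : ∃ P : K × K, IsSingAt K (wPoly K p q α) P)
    (hβsing : ∃ P : K × K, IsSingAt K (wPoly K p q β) P)
    (hcommon : ∃ P : K × K, IsSingAt K (wPoly K p q α) P ∧ IsSingAt K (wPoly K p q β) P) :
    (∀ t : K, ∃ P : K × K,
      IsSingAt K (wPoly K p q fun i => α i + t * (β i - α i)) P) ∧
    {t : K |
      {P : K × K | IsSingAt K (wPoly K p q fun i => α i + t * (β i - α i)) P} ≠
        {P : K × K | IsSingAt K (wPoly K p q α) P} ∩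
          {P : K × K | IsSingAt K (wPoly K p q β) P}}.Finite := by
  obtain ⟨P₀, hα₀, hβ₀⟩ := hcommon
  refine ⟨fun t => ⟨P₀, isSingAt_wPoly_line_of_common hα₀ hβ₀ t⟩, ?_⟩
  have hbase := finite_base_locus (zero_lt_one.trans hp) (by lia) hco hne
  let B := {P : K × K | eval ![P.1, P.2] (wPoly K p q α) = 0 ∧
      eval ![P.1, P.2] (wPoly K p q β) = 0} \
    {P | IsSingAt K (wPoly K p q α) P ∧ IsSingAt K (wPoly K p q β) P}
  have hB : (⋃ P ∈ B, {t : K | IsSingAt K (wPoly K p q fun i => α i + t * (β i - α i)) P}).Finite :=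
    hbase.sdiff.biUnion fun P hP => (subsingleton_setOf_isSingAt_wPoly_line hP.2).finite
  refine ((finite_setOf_singular_off_base_locus (wPoly K p q α)
    (wPoly K p q β - wPoly K p q α)).union hB).subset ?_
  intro t ht
  by_contra hnot
  refine ht (Set.Subset.antisymm (fun P hP => ?_)
    fun P hP => isSingAt_wPoly_line_of_common hP.1 hP.2 t)
  by_contra hPn
  have hsing := (isSingAt_wPoly_line_iff α β t P).1 hP
  by_cases hH : eval ![P.1, P.2] (wPoly K p q β - wPoly K p q α) = 0
  · have hα : eval ![P.1, P.2] (wPoly K p q α) = 0 := by simpa [hH] using hsing.1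
    refine hnot (.inr (Set.mem_biUnion (x := P) ⟨⟨hα, ?_⟩, hPn⟩ hP))
    simpa [hα] using hH
  · exact hnot (.inl ⟨_, hsing.1, hH, hsing.2⟩)
end
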